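/- arXiv:0811.0364 — 2 statements merged into one kernel-verified Lean document; each statement's English description precedes it below -/
import Mathlib

section
/- Let X ⊂ ℂ be a non-separating continuum and let h : Bd(X) × [0,1] → ℂ be an isotopy with h^0 = id. If x ∈ Bd(X) is accessible from U = ℂ \ X, then for every t ∈ [0,1] the point h^t(x) is accessible from U^t, the unbounded component of ℂ \ h^t(Bd(X)). -/
open Set Metric Topology Filter

/-- A point `x` is accessible from a set `U ⊆ ℂ` if there is an arc `γ : [0,1] → ℂ`
with `γ 1 = x` and `γ([0,1)) ⊆ U`. -/
def Accessible (U : Set ℂ) (x : ℂ) : Prop :=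
  ∃ γ : ℝ → ℂ, ContinuousOn γ (Set.Icc 0 1) ∧ Set.InjOn γ (Set.Icc 0 1) ∧
    γ 1 = x ∧ γ '' Set.Ico 0 1 ⊆ U

/-- The union of the unbounded connected components of the complement of `K`;
for compact `K` this is the (unique) unbounded component of `ℂ \ K`. -/
def unbddComp (K : Set ℂ) : Set ℂ :=
  {z : ℂ | z ∈ Kᶜ ∧ ¬ Bornology.IsBounded (connectedComponentIn Kᶜ z)}

/-!
A point `a` of a compact set `K` is accessible from the unbounded component of `ℂ \ K` if and only
if `z - a` has a continuous logarithm on `K \ {a}`. The second condition only depends on the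
homotopy class of `z ↦ z - a` as a nonvanishing function, and along an isotopy `h` the functions
`z ↦ h z t - h x t` form such a homotopy.

If `a` is accessible, moving a point `q` from infinity to `a` in `ℂ \ (K \ {a})` is a homotopy from
`z - q`, which has a logarithm for large `q`, to `z - a`. Conversely, extend the imaginary part of
the logarithm from `K \ {a}` to the whole punctured plane and let `u` be `z - a` turned back by the
resulting angle. Then `u = ‖u‖` on `K`, so the set `u = -‖u‖` meets `K` only in `a`. The component
of `a` in this set is unbounded, as otherwise `z - a` would have a logarithm on a large circle.
Hence a continuum joins `a` to infinity outside `K`. Covering it away from `a` by balls in `ℂ \ K`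
that shrink towards `a`, a geodesic ray in the locally finite intersection graph of these balls is
the vertex sequence of a simple polygonal line ending at `a`.
-/

/-- The complex function `f` has a continuous branch of its logarithm. -/
def HasContinuousLog {Y : Type*} [TopologicalSpace Y] (f : Y → ℂ) : Prop :=
  ∃ L : C(Y, ℂ), ∀ y, Complex.exp (L y) = f y

namespace HasContinuousLog

variable {Y Z : Type*} [TopologicalSpace Y] [TopologicalSpace Z] {f g : Y → ℂ}

theorem comp (hf : HasContinuousLog f) {φ : Z → Y} (hφ : Continuous φ) :
    HasContinuousLog (f ∘ φ) :=
  let ⟨L, hL⟩ := hf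
  ⟨L.comp ⟨φ, hφ⟩, fun z => hL (φ z)⟩

theorem mul (hf : HasContinuousLog f) (hg : HasContinuousLog g) : HasContinuousLog (f * g) :=
  let ⟨L, hL⟩ := hf
  let ⟨M, hM⟩ := hg
  ⟨L + M, fun y => by simp [Complex.exp_add, hL, hM]⟩

theorem const {c : ℂ} (hc : c ≠ 0) : HasContinuousLog fun _ : Y => c :=
  ⟨.const Y (Complex.log c), fun _ => Complex.exp_log hc⟩

theorem of_mem_slitPlane (hf : Continuous f) (h : ∀ y, f y ∈ Complex.slitPlane) :
    HasContinuousLog f :=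
  ⟨⟨fun y => Complex.log (f y), hf.clog h⟩,
    fun y => Complex.exp_log (Complex.slitPlane_ne_zero (h y))⟩

theorem of_homotopy {F : unitInterval × Y → ℂ} (hF : Continuous F) (hF0 : ∀ p, F p ≠ 0)
    (h : HasContinuousLog fun y => F (0, y)) : HasContinuousLog fun y => F (1, y) := by
  obtain ⟨L, hL⟩ := h
  let H : C(unitInterval × Y, {z : ℂ // z ≠ 0}) := ⟨fun p => ⟨F p, hF0 p⟩, by fun_prop⟩
  have hH : ∀ y, H (0, y) = (⟨Complex.exp (L y), Complex.exp_ne_zero _⟩ : {z : ℂ // z ≠ 0}) :=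
    fun y => Subtype.ext (hL y).symm
  let lift := Complex.isCoveringMap_exp.liftHomotopy H L hH
  exact ⟨⟨fun y => lift (1, y), by fun_prop⟩, fun y => congrArg Subtype.val
    (congrFun (Complex.isCoveringMap_exp.liftHomotopy_lifts H L hH) (1, y))⟩

theorem of_contractibleSpace [ContractibleSpace Y] (hf : Continuous f) (hf0 : ∀ y, f y ≠ 0) :
    HasContinuousLog f := by
  obtain ⟨y₀, ⟨H⟩⟩ := id_nullhomotopic Y
  have h0 : HasContinuousLog fun y => f (H.symm (0, y)) := by simpa using const (hf0 y₀)
  simpa using h0.of_homotopy (F := fun p => f (H.symm p)) (by fun_prop) fun p => hf0 _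

theorem range_iff {e : Y → Z} (he : IsEmbedding e) {f : Z → ℂ} :
    (HasContinuousLog fun z : range e => f z) ↔ HasContinuousLog fun y => f (e y) := by
  refine ⟨fun h => h.comp he.toHomeomorph.continuous, fun h => ?_⟩
  convert h.comp he.toHomeomorph.symm.continuous using 1
  ext z
  exact congrArg f (congrArg Subtype.val (he.toHomeomorph.apply_symm_apply z)).symm

end HasContinuousLog

/-- Along the parametrised circle, a logarithm of `z - a` would be a second lift of a path that
already lifts to a non-closed segment. -/
theorem not_hasContinuousLog_sphere (a : ℂ) {M : ℝ} (hM : 0 < M) :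
    ¬ HasContinuousLog fun z : sphere a M => (z : ℂ) - a := by
  rintro ⟨L, hL⟩
  let c : ℝ → sphere a M := fun t => ⟨circleMap a M t, circleMap_mem_sphere a hM.le t⟩
  have hc : Continuous c := (continuous_circleMap a M).subtype_mk _
  have hlift := Complex.isCoveringMap_exp.eq_of_comp_eq (L.continuous.comp hc)
    (g₂ := fun t : ℝ => L (c 0) + t * Complex.I) (by fun_prop)
    (funext fun t => Subtype.ext <| by simp [Complex.exp_add, hL, c, circleMap]) 0 (by simp)
  have hloop : c (2 * Real.pi) = c 0 := Subtype.ext (by simp [c, circleMap])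
  have := congrFun hlift (2 * Real.pi)
  simp [hloop, Real.pi_ne_zero] at this

theorem exists_continuous_arg_extension {K : Set ℂ} (hK : IsClosed K) {a : ℂ}
    (hlog : HasContinuousLog fun z : ↥(K \ {a}) => (z : ℂ) - a) :
    ∃ Θ : C(↥({a}ᶜ : Set ℂ), ℝ), ∀ z : ↥({a}ᶜ : Set ℂ), (z : ℂ) ∈ K →
      (z : ℂ) - a = ‖(z : ℂ) - a‖ * Complex.exp (Θ z * Complex.I) := by
  obtain ⟨L, hL⟩ := hlog
  let s : Set ↥({a}ᶜ : Set ℂ) := {z | (z : ℂ) ∈ K}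
  let θ : C(s, ℝ) := ⟨fun z => (L ⟨z.1, z.2, z.1.2⟩).im, by fun_prop⟩
  obtain ⟨Θ, hΘ⟩ := θ.exists_restrict_eq (hK.preimage continuous_subtype_val)
  refine ⟨Θ, fun z hz => ?_⟩
  have hΘL : Θ z = (L ⟨z, hz, z.2⟩).im := DFunLike.congr_fun hΘ ⟨z, hz⟩
  have hLz : Complex.exp (L ⟨z, hz, z.2⟩) = (z : ℂ) - a := hL _
  rw [hΘL, ← hLz, Complex.norm_exp, Complex.ofReal_exp, ← Complex.exp_add,
    Complex.re_add_im]

/-- Multiplying `z - a` by `exp (-iΘ)`, for an extension `Θ` to the punctured plane of its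
argument on `K`, unwinds `K` onto the ray `u = ‖u‖`. -/
theorem exists_unwinding {K : Set ℂ} (hK : IsClosed K) {a : ℂ}
    (hlog : HasContinuousLog fun z : ↥(K \ {a}) => (z : ℂ) - a) :
    ∃ u : ℂ → ℂ, Continuous u ∧ (∀ z, ‖u z‖ = ‖z - a‖) ∧ (∀ z ∈ K, u z = ‖z - a‖) ∧
      HasContinuousLog fun z : ↥({a}ᶜ : Set ℂ) => (z - a) / u z := by
  classical
  obtain ⟨Θ, hΘ⟩ := exists_continuous_arg_extension hK hlog
  let v : ↥({a}ᶜ : Set ℂ) → ℂ := fun z => (z - a) / Complex.exp (Θ z * Complex.I)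
  let u : ℂ → ℂ := fun z => if h : z = a then 0 else v ⟨z, h⟩
  have hua : u a = 0 := by simp [u]
  have huv : ∀ z : ↥({a}ᶜ : Set ℂ), u z = v z := fun z => dif_neg z.2
  have hnorm : ∀ z, ‖u z‖ = ‖z - a‖ := fun z => by
    by_cases h : z = a
    · simp [h, hua]
    · rw [huv ⟨z, h⟩, norm_div, Complex.norm_exp_ofReal_mul_I, div_one]
  refine ⟨u, continuous_iff_continuousAt.2 fun z => ?_, hnorm, fun z hz => ?_,
    ⟨⟨fun z => Θ z * Complex.I, by fun_prop⟩, fun z => ?_⟩⟩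
  · by_cases h : z = a
    · subst h
      rw [ContinuousAt, hua, tendsto_zero_iff_norm_tendsto_zero]
      simp only [hnorm]
      exact tendsto_iff_norm_sub_tendsto_zero.1 tendsto_id
    · have hv : Continuous v := by fun_prop (disch := exact fun _ => Complex.exp_ne_zero _)
      have hu : ContinuousOn u {a}ᶜ :=
        continuousOn_iff_continuous_domRestrict.2 (hv.congr fun z => (huv z).symm)
      exact hu.continuousAt (isOpen_compl_singleton.mem_nhds h)
  · by_cases h : z = a
    · simp [h, hua]
    · exact (huv ⟨z, h⟩).trans ((div_eq_iff (Complex.exp_ne_zero _)).2 (hΘ ⟨z, h⟩ hz))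
  · have hz : (z : ℂ) - a ≠ 0 := sub_ne_zero.2 z.2
    exact ((congrArg _ (huv z)).trans (div_div_cancel₀ hz)).symm

/-- If the ray `u = -‖u‖` split, pushing `u` off zero along the bounded piece would give a
nonvanishing function on the plane, hence a logarithm of `z - a` near infinity. -/
theorem not_isBounded_of_disjoint_cover {a : ℂ} {u : ℂ → ℂ} (hu : Continuous u)
    (hnorm : ∀ z, ‖u z‖ = ‖z - a‖)
    (hlog : HasContinuousLog fun z : ↥({a}ᶜ : Set ℂ) => (z - a) / u z) {A B : Set ℂ}
    (hA : IsClosed A) (hB : IsClosed B) (hAB : Disjoint A B) (haA : a ∈ A)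
    (hcover : {z | u z = -‖z - a‖} ⊆ A ∪ B) : ¬ Bornology.IsBounded A := by
  intro hbdd
  obtain ⟨M, hM, hAM⟩ := hbdd.subset_ball_lt 0 a
  obtain ⟨φ, hφ0, hφ1, hφ⟩ := exists_continuous_zero_one_of_isClosed (hB.union isClosed_sphere) hA
    (disjoint_union_left.2 ⟨hAB.symm, sphere_disjoint_ball.mono_right hAM⟩)
  let w : ℂ → ℂ := fun z => u z + ((φ z * (‖z - a‖ + 1) : ℝ) : ℂ)
  have hw0 : ∀ z, w z ≠ 0 := by
    intro z hz
    have huz : u z = -((φ z * (‖z - a‖ + 1) : ℝ) : ℂ) := eq_neg_of_add_eq_zero_left hz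
    have hφz : ‖z - a‖ = φ z * (‖z - a‖ + 1) := by
      have := congrArg norm huz
      rwa [hnorm, norm_neg, Complex.norm_real,
        Real.norm_of_nonneg (mul_nonneg (hφ z).1 (by positivity))] at this
    rcases hcover (show u z = -‖z - a‖ by rw [huz, ← hφz]) with h | h
    · rw [hφ1 h] at hφz
      simp at hφz
    · rw [hφ0 (Or.inl h), Pi.zero_apply, zero_mul, norm_eq_zero, sub_eq_zero] at hφz
      exact hAB.ne_of_mem haA h hφz.symm
  have hsphere : ∀ z : sphere a M, (z : ℂ) ≠ a := fun z => ne_of_mem_sphere z.2 hM.ne'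
  have hwlog : HasContinuousLog w := .of_contractibleSpace (by fun_prop) hw0
  refine not_hasContinuousLog_sphere a hM ?_
  convert (hwlog.comp continuous_subtype_val).mul
    (hlog.comp (Continuous.subtype_mk continuous_subtype_val hsphere)) using 1
  ext z
  have hwz : w z = u z := by simp [w, hφ0 (Or.inr z.2)]
  have huz : u z ≠ 0 := by
    rw [← norm_ne_zero_iff, hnorm, norm_ne_zero_iff, sub_ne_zero]
    exact hsphere z
  simp only [Pi.mul_apply, Function.comp_apply, hwz]
  field_simp

theorem exists_isClopen_subset_of_connectedComponent_subset {X : Type*} [TopologicalSpace X]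
    [CompactSpace X] [T2Space X] {x : X} {U : Set X} (hU : IsOpen U)
    (h : connectedComponent x ⊆ U) : ∃ Z, IsClopen Z ∧ x ∈ Z ∧ Z ⊆ U := by
  have hdir : Directed (· ⊇ ·) fun Z : {Z : Set X // IsClopen Z ∧ x ∈ Z} => Z.1 := fun Z W =>
    ⟨⟨Z.1 ∩ W.1, Z.2.1.inter W.2.1, Z.2.2, W.2.2⟩, inter_subset_left, inter_subset_right⟩
  have : Nonempty {Z : Set X // IsClopen Z ∧ x ∈ Z} := ⟨univ, isClopen_univ, mem_univ x⟩
  rw [connectedComponent_eq_iInter_isClopen] at h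
  obtain ⟨Z, hZ⟩ := exists_subset_nhds_of_compactSpace hdir (fun Z => Z.2.1.1)
    fun y hy => hU.mem_nhds (h hy)
  exact ⟨Z, Z.2.1, Z.2.2, hZ⟩

theorem isCompact_connectedComponentIn {X : Type*} [TopologicalSpace X] {E : Set X}
    (hE : IsCompact E) (a : X) : IsCompact (connectedComponentIn E a) := by
  have := isCompact_iff_compactSpace.1 hE
  by_cases ha : a ∈ E
  · rw [connectedComponentIn_eq_image ha]
    exact isClosed_connectedComponent.isCompact.image continuous_subtype_val
  · simp [connectedComponentIn_eq_empty ha]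

/-- Boundary bumping. -/
theorem connectedComponentIn_inter_nonempty {X : Type*} [TopologicalSpace X] [T2Space X]
    {E S : Set X} (hE : IsCompact E) (hS : IsClosed S) {a : X} (ha : a ∈ E)
    (h : ∀ A B, IsClosed A → IsClosed B → Disjoint A B → A ∪ B = E → a ∈ A → (A ∩ S).Nonempty) :
    (connectedComponentIn E a ∩ S).Nonempty := by
  have := isCompact_iff_compactSpace.1 hE
  rw [connectedComponentIn_eq_image ha]
  by_contra hempty
  obtain ⟨Z, hZ, haZ, hZS⟩ := exists_isClopen_subset_of_connectedComponent_subset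
    (x := (⟨a, ha⟩ : E)) (U := (Subtype.val ⁻¹' S)ᶜ)
    (hS.preimage continuous_subtype_val).isOpen_compl
    fun y hy hyS => hempty ⟨y, mem_image_of_mem _ hy, hyS⟩
  have hval := hE.isClosed.isClosedMap_subtype_val
  obtain ⟨_, ⟨y, hyZ, rfl⟩, hyS⟩ := h (Subtype.val '' Z) (Subtype.val '' Zᶜ)
    (hval _ hZ.1) (hval _ hZ.2.isClosed_compl)
    (disjoint_compl_right.image Subtype.val_injective.injOn (subset_univ _) (subset_univ _))
    (by rw [← image_union, union_compl_self, image_univ, Subtype.range_coe]) ⟨_, haZ, rfl⟩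
  exact hZS hyZ hyS

theorem exists_continuum_of_hasContinuousLog {K : Set ℂ} (hK : IsClosed K) {a : ℂ}
    (hlog : HasContinuousLog fun z : ↥(K \ {a}) => (z : ℂ) - a) {R : ℝ} (hR : 0 ≤ R) :
    ∃ C : Set ℂ, IsCompact C ∧ IsPreconnected C ∧ a ∈ C ∧ C \ {a} ⊆ Kᶜ ∧
      (C ∩ sphere a R).Nonempty := by
  obtain ⟨u, hu, hnorm, huK, hulog⟩ := exists_unwinding hK hlog
  let E : Set ℂ := {z | u z = -‖z - a‖} ∩ closedBall a R
  have hE : IsCompact E :=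
    (isCompact_closedBall a R).inter_left (isClosed_eq hu (by fun_prop))
  have ha : a ∈ E := ⟨by simp [← norm_eq_zero, hnorm], mem_closedBall_self hR⟩
  have hEK : E \ {a} ⊆ Kᶜ := by
    rintro z ⟨⟨hz, -⟩, hza⟩ hzK
    have : (‖z - a‖ : ℂ) = -‖z - a‖ := (huK z hzK).symm.trans hz
    rw [self_eq_neg, Complex.ofReal_eq_zero, norm_eq_zero, sub_eq_zero] at this
    exact hza this
  refine ⟨connectedComponentIn E a, isCompact_connectedComponentIn hE a,
    isPreconnected_connectedComponentIn, mem_connectedComponentIn ha,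
    (sdiff_subset_sdiff_left (connectedComponentIn_subset E a)).trans hEK,
    connectedComponentIn_inter_nonempty hE isClosed_sphere ha ?_⟩
  intro A B hA hB hAB hcover haA
  by_contra hAR
  have hEA : ∀ z ∈ A, z ∈ E := fun z hz => hcover.subset (Or.inl hz)
  let far : Set ℂ := {z | u z = -‖z - a‖} ∩ {z | R ≤ dist z a}
  have hfar : IsClosed far :=
    (isClosed_eq hu (by fun_prop)).inter (isClosed_le continuous_const (by fun_prop))
  refine not_isBounded_of_disjoint_cover hu hnorm hulog hA (hB.union hfar)
    (disjoint_union_right.2 ⟨hAB, disjoint_left.2 fun z hz hzfar => ?_⟩) haA (fun z hz => ?_)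
    (hE.isBounded.subset hEA)
  · exact hAR ⟨z, hz, le_antisymm (hEA z hz).2 hzfar.2⟩
  · rcases le_total R (dist z a) with hle | hle
    · exact Or.inr (Or.inr ⟨hz, hle⟩)
    · exact (hcover.superset ⟨hz, hle⟩).imp id Or.inl

/-- König's lemma. -/
theorem exists_seq_of_infinite_reflTransGen {α : Type*} {R : α → α → Prop}
    (hfin : ∀ x, {y | R x y}.Finite) {x : α} (hinf : {y | Relation.ReflTransGen R x y}.Infinite) :
    ∃ c : ℕ → α, c 0 = x ∧ ∀ n, R (c n) (c (n + 1)) := by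
  have hstep (x : {x | {y | Relation.ReflTransGen R x y}.Infinite}) :
      ∃ y : {x | {y | Relation.ReflTransGen R x y}.Infinite}, R x y := by
    by_contra! hcon
    refine x.2 (Finite.subset ((finite_singleton x.1).union <| (hfin x).biUnion fun y hy =>
      not_infinite.1 fun hy' => hcon ⟨y, hy'⟩ hy) fun z hz => ?_)
    rcases hz.cases_head with rfl | ⟨y, hxy, hyz⟩
    · exact Or.inl rfl
    · exact Or.inr (mem_biUnion hxy hyz)
  choose next hnext using hstep
  exact ⟨fun n => next^[n] ⟨x, hinf⟩, rfl, fun n => by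
    simpa only [Function.iterate_succ_apply'] using hnext _⟩

theorem reflTransGen_dist_succ_of_reachable {V : Type*} {G : SimpleGraph V} {v w : V}
    (h : G.Reachable v w) :
    Relation.ReflTransGen (fun x y => G.Adj x y ∧ G.dist v y = G.dist v x + 1) v w := by
  induction hn : G.dist v w generalizing w with
  | zero => rw [h.dist_eq_zero_iff.1 hn]
  | succ n ih =>
    obtain ⟨p, hp⟩ := h.symm.exists_walk_length_eq_dist
    rw [SimpleGraph.dist_comm, hn] at hp
    cases p with
    | nil => simp at hp
    | @cons _ u _ hadj q =>
      have hle : G.dist v u ≤ n := by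
        rw [SimpleGraph.dist_comm, ← Nat.succ.inj hp]
        exact SimpleGraph.dist_le q
      have hu : G.dist v u = n := by
        have := hadj.diff_dist_adj (u := v)
        lia
      exact (ih q.reachable.symm hu).tail ⟨hadj.symm, by rw [hn, hu]⟩

theorem exists_geodesic_ray {V : Type*} {G : SimpleGraph V}
    (hfin : ∀ v, (G.neighborSet v).Finite) {v : V} (hinf : {w | G.Reachable v w}.Infinite) :
    ∃ c : ℕ → V, c 0 = v ∧ (∀ n, G.Adj (c n) (c (n + 1))) ∧ ∀ n, G.dist v (c n) = n := by
  obtain ⟨c, hc0, hc⟩ := exists_seq_of_infinite_reflTransGen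
    (R := fun x y => G.Adj x y ∧ G.dist v y = G.dist v x + 1)
    (fun x => (hfin x).subset fun y hy => hy.1)
    (hinf.mono fun w hw => reflTransGen_dist_succ_of_reachable hw)
  refine ⟨c, hc0, fun n => (hc n).1, fun n => ?_⟩
  induction n with
  | zero => simp [hc0]
  | succ n ih => rw [(hc n).2, ih]

theorem le_succ_of_adj_of_dist_eq {V : Type*} {G : SimpleGraph V} {v : V} {c : ℕ → V}
    (hc : ∀ n, G.dist v (c n) = n) {i j : ℕ} (h : G.Adj (c i) (c j)) : j ≤ i + 1 := by
  have := h.diff_dist_adj (u := v)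
  simp only [hc] at this
  lia

theorem accessible_of_tendsto_atTop {U : Set ℂ} {a : ℂ} {P : ℝ → ℂ} (hP : ContinuousOn P (Ici 0))
    (hinj : InjOn P (Ici 0)) (hlim : Tendsto P atTop (𝓝 a)) (hPU : MapsTo P (Ici 0) U)
    (ha : a ∉ U) : Accessible U a := by
  let φ : ℝ → ℝ := fun t => (1 - t)⁻¹ - 1
  have hφ : MapsTo φ (Ico 0 1) (Ici 0) := fun t ht =>
    sub_nonneg.2 <| (one_le_inv₀ (sub_pos.2 ht.2)).2 (sub_le_self 1 ht.1)
  have hφcont : ContinuousOn φ (Ico 0 1) :=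
    ((continuousOn_const.sub continuousOn_id).inv₀ fun t ht => (sub_pos.2 ht.2).ne').sub
      continuousOn_const
  have hφinj : Function.Injective φ := fun s t hst =>
    sub_right_injective (inv_injective (sub_left_injective hst))
  have hφlim : Tendsto φ (𝓝[<] 1) atTop := by
    have h : Tendsto (fun t : ℝ => 1 - t) (𝓝[<] 1) (𝓝[>] 0) := by
      refine tendsto_nhdsWithin_iff.2 ⟨?_, ?_⟩
      · exact ((continuous_sub_left (1 : ℝ)).tendsto' 1 0 (sub_self 1)).mono_left nhdsWithin_le_nhds
      · filter_upwards [self_mem_nhdsWithin] with t ht using sub_pos.2 (mem_Iio.1 ht)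
    exact tendsto_atTop_add_const_right _ _ (tendsto_inv_nhdsGT_zero.comp h)
  have heq : EqOn (Function.update (P ∘ φ) 1 a) (P ∘ φ) (Ico 0 1) := fun t ht =>
    Function.update_of_ne ht.2.ne _ _
  have hmaps : MapsTo (Function.update (P ∘ φ) 1 a) (Ico 0 1) U := fun t ht => by
    rw [heq ht]
    exact hPU (hφ ht)
  refine ⟨Function.update (P ∘ φ) 1 a, ?_, ?_, Function.update_self .., hmaps.image_subset⟩
  · rw [continuousOn_update_iff, Icc_sdiff_right]
    exact ⟨hP.comp hφcont hφ,
      fun _ => (hlim.comp hφlim).mono_left (nhdsWithin_mono _ Ico_subset_Iio_self)⟩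
  · rw [← Ico_insert_right zero_le_one, injOn_insert right_notMem_Ico, Function.update_self,
      heq.injOn_iff]
    exact ⟨hinj.comp hφinj.injOn hφ, fun h => ha (hmaps.image_subset h)⟩

section PolygonalRay

variable {E : Type*} [SeminormedAddCommGroup E] [NormedSpace ℝ E] {c : ℕ → E}

/-- The infinite polygonal path with vertices `c 0, c 1, …`, parametrised by `[0, ∞)` so that it
is at `c n` at time `n`. -/
noncomputable def polygonalRay (c : ℕ → E) (s : ℝ) : E :=
  AffineMap.lineMap (c ⌊s⌋₊) (c (⌊s⌋₊ + 1)) (s - ⌊s⌋₊)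

theorem polygonalRay_mem_segment {s : ℝ} (hs : 0 ≤ s) :
    polygonalRay c s ∈ segment ℝ (c ⌊s⌋₊) (c (⌊s⌋₊ + 1)) := by
  rw [segment_eq_image_lineMap]
  exact ⟨s - ⌊s⌋₊, ⟨sub_nonneg.2 (Nat.floor_le hs), by linarith [Nat.lt_floor_add_one s]⟩, rfl⟩

theorem polygonalRay_of_mem_Icc {n : ℕ} {s : ℝ} (hs : s ∈ Icc (n : ℝ) (n + 1)) :
    polygonalRay c s = AffineMap.lineMap (c n) (c (n + 1)) (s - n) := by
  rcases hs.2.lt_or_eq with h | rfl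
  · rw [polygonalRay, Nat.floor_eq_on_Ico n s ⟨hs.1, h⟩]
  · have : ⌊(n : ℝ) + 1⌋₊ = n + 1 := mod_cast Nat.floor_natCast (n + 1)
    simp [polygonalRay, this]

theorem continuousOn_polygonalRay : ContinuousOn (polygonalRay c) (Ici 0) := by
  have hIcc (N : ℕ) : ContinuousOn (polygonalRay c) (Icc 0 (N : ℝ)) := by
    induction N with
    | zero => simp
    | succ N ih =>
      rw [Nat.cast_succ, ← Icc_union_Icc_eq_Icc N.cast_nonneg (by linarith : (N : ℝ) ≤ N + 1)]
      refine ih.union_of_isClosed ?_ isClosed_Icc isClosed_Icc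
      refine ContinuousOn.congr ?_ fun s hs => polygonalRay_of_mem_Icc hs
      exact (AffineMap.lineMap_continuous.comp (continuous_sub_right _)).continuousOn
  intro s hs
  obtain ⟨N, hN⟩ := exists_nat_gt s
  refine (hIcc N s ⟨hs, hN.le⟩).mono_of_mem_nhdsWithin ?_
  rw [← Ici_inter_Iic]
  exact inter_mem self_mem_nhdsWithin (mem_nhdsWithin_of_mem_nhds (Iic_mem_nhds hN))

theorem tendsto_polygonalRay {a : E} (hc : Tendsto c atTop (𝓝 a)) :
    Tendsto (polygonalRay c) atTop (𝓝 a) := by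
  refine nhds_basis_ball.tendsto_right_iff.2 fun ε hε => ?_
  have hfloor : Tendsto (fun s : ℝ => ⌊s⌋₊) atTop atTop := tendsto_nat_floor_atTop
  filter_upwards [eventually_ge_atTop 0, (hc.comp hfloor).eventually_mem (ball_mem_nhds a hε),
    ((hc.comp (tendsto_add_atTop_nat 1)).comp hfloor).eventually_mem (ball_mem_nhds a hε)]
    with s hs h1 h2
  exact (convex_ball a ε).segment_subset h1 h2 (polygonalRay_mem_segment hs)

theorem injOn_polygonalRay (hne : ∀ n, c n ≠ c (n + 1))
    (hinter : ∀ i j, i < j →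
      segment ℝ (c i) (c (i + 1)) ∩ segment ℝ (c j) (c (j + 1)) ⊆ {c (i + 1)}) :
    InjOn (polygonalRay c) (Ici 0) := by
  suffices h : ∀ s t, 0 ≤ s → s < t → polygonalRay c s ≠ polygonalRay c t by
    intro s hs t ht hst
    by_contra hne'
    rcases lt_or_gt_of_ne hne' with hlt | hlt
    exacts [h s t hs hlt hst, h t s ht hlt hst.symm]
  intro s t hs hst heq
  have hlineMap := AffineMap.lineMap_injective ℝ (hne ⌊s⌋₊)
  rcases (Nat.floor_mono hst.le).lt_or_eq with hfloor | hfloor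
  · have hvertex : polygonalRay c s = c (⌊s⌋₊ + 1) := hinter _ _ hfloor
      ⟨polygonalRay_mem_segment hs, heq ▸ polygonalRay_mem_segment (hs.trans hst.le)⟩
    linarith [hlineMap (hvertex.trans (AffineMap.lineMap_apply_one _ _).symm),
      Nat.lt_floor_add_one s]
  · rw [polygonalRay, polygonalRay, ← hfloor] at heq
    linarith [hlineMap heq]

end PolygonalRay

section BallChain

variable {E : Type*} [SeminormedAddCommGroup E] [NormedSpace ℝ E] {ρ : E → ℝ}

/-- Whenever balls of radius `ρ` about consecutive vertices overlap, a crossing of two edges makes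
the balls about two further vertices overlap. -/
theorem dist_lt_add_or_of_mem_segment {a b c d p : E} (hp : p ∈ segment ℝ a b)
    (hp' : p ∈ segment ℝ c d) (hab : dist a b < ρ a + ρ b) (hcd : dist c d < ρ c + ρ d) :
    dist a c < ρ a + ρ c ∨ dist b d < ρ b + ρ d := by
  have hab' := dist_add_dist_of_mem_segment hp
  have hcd' := dist_add_dist_of_mem_segment hp'
  have hac := dist_triangle_right a c p
  have hbd := dist_triangle b p d
  rw [dist_comm c p] at *
  rw [dist_comm b p] at *
  by_contra! hcon
  linarith [hcon.1, hcon.2]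

theorem dist_lt_add_of_wbtw (hρ : LipschitzWith 1 ρ) {a b c : E} (h : Wbtw ℝ b a c)
    (hbc : dist b c < ρ b + ρ c) : dist a c < ρ a + ρ c := by
  have hlip := hρ.le_add_mul b a
  rw [NNReal.coe_one, one_mul] at hlip
  linarith [h.dist_add_dist]

theorem dist_lt_add_of_mem_segment_of_ne (hρ : LipschitzWith 1 ρ) {a b c p : E}
    (hp : p ∈ segment ℝ a b) (hp' : p ∈ segment ℝ b c) (hpb : p ≠ b)
    (hab : dist a b < ρ a + ρ b) (hbc : dist b c < ρ b + ρ c) : dist a c < ρ a + ρ c := by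
  have hray : SameRay ℝ (a -ᵥ b) (c -ᵥ b) :=
    (mem_segment_iff_wbtw.1 hp).symm.sameRay_vsub_left.symm.trans
      (mem_segment_iff_wbtw.1 hp').sameRay_vsub_left fun h => absurd (vsub_eq_zero_iff_eq.1 h) hpb
  rcases wbtw_total_of_sameRay_vsub_left hray with h | h
  · exact dist_lt_add_of_wbtw hρ h hbc
  · rw [dist_comm, add_comm] at hab ⊢
    exact dist_lt_add_of_wbtw hρ h hab

/-- A chain of balls: the balls of radius `ρ (c n)` about the points `c n` overlap for consecutive
indices and only for those. Overlapping is expressed by the distance of the centres. -/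
structure IsBallChain {X : Type*} [PseudoMetricSpace X] (ρ : X → ℝ) (c : ℕ → X) : Prop where
  dist_lt (n : ℕ) : dist (c n) (c (n + 1)) < ρ (c n) + ρ (c (n + 1))
  le_dist {i j : ℕ} (hij : i + 2 ≤ j) : ρ (c i) + ρ (c j) ≤ dist (c i) (c j)

namespace IsBallChain

theorem ne_succ {X : Type*} [PseudoMetricSpace X] {ρ : X → ℝ} {c : ℕ → X} (hc : IsBallChain ρ c)
    (n : ℕ) : c n ≠ c (n + 1) := fun h =>
  (h ▸ hc.le_dist (Nat.le_refl (n + 2))).not_gt (hc.dist_lt (n + 1))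

variable {c : ℕ → E}

theorem segment_inter_segment_subset (hc : IsBallChain ρ c) (hρ : LipschitzWith 1 ρ) {i j : ℕ}
    (hij : i < j) :
    segment ℝ (c i) (c (i + 1)) ∩ segment ℝ (c j) (c (j + 1)) ⊆ {c (i + 1)} := by
  rintro p ⟨hpi, hpj⟩
  by_contra hp
  rcases Nat.succ_le_of_lt hij |>.eq_or_lt with rfl | hij'
  · exact (hc.le_dist le_rfl).not_gt
      (dist_lt_add_of_mem_segment_of_ne hρ hpi hpj hp (hc.dist_lt _) (hc.dist_lt _))
  · rcases dist_lt_add_or_of_mem_segment hpi hpj (hc.dist_lt i) (hc.dist_lt j) with h | h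
    · exact (hc.le_dist hij').not_gt h
    · exact (hc.le_dist (Nat.succ_le_succ hij')).not_gt h

theorem segment_subset (hc : IsBallChain ρ c) (n : ℕ) :
    segment ℝ (c n) (c (n + 1)) ⊆ ⋃ n, ball (c n) (ρ (c n)) := by
  intro p hp
  have := dist_add_dist_of_mem_segment hp
  rcases lt_or_ge (dist p (c n)) (ρ (c n)) with h | h
  · exact mem_iUnion_of_mem n h
  · refine mem_iUnion_of_mem (n + 1) (mem_ball.2 ?_)
    linarith [hc.dist_lt n, dist_comm p (c n)]

theorem isPreconnected_iUnion_ball (hc : IsBallChain ρ c) (hpos : ∀ n, 0 < ρ (c n)) :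
    IsPreconnected (⋃ n, ball (c n) (ρ (c n))) := by
  refine IsPreconnected.iUnion_of_chain (fun n => (convex_ball _ _).isPreconnected) fun n => ?_
  rw [← not_disjoint_iff_nonempty_inter, disjoint_ball_ball_iff (hpos _) (hpos _), not_le]
  exact hc.dist_lt n

theorem accessible_iUnion_ball {ρ : ℂ → ℝ} {c : ℕ → ℂ} (hc : IsBallChain ρ c)
    (hρ : LipschitzWith 1 ρ) {a : ℂ} (hlim : Tendsto c atTop (𝓝 a))
    (ha : ∀ n, ρ (c n) ≤ dist (c n) a) : Accessible (⋃ n, ball (c n) (ρ (c n))) a := by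
  refine accessible_of_tendsto_atTop continuousOn_polygonalRay
    (injOn_polygonalRay hc.ne_succ fun i j => hc.segment_inter_segment_subset hρ)
    (tendsto_polygonalRay hlim)
    (fun s hs => hc.segment_subset _ (polygonalRay_mem_segment hs)) ?_
  simpa [dist_comm a] using ha

end IsBallChain

end BallChain

section BallGraph

variable {X : Type*} [PseudoMetricSpace X] {C F : Set X} {a : X} {ρ : X → ℝ}

/-- The graph on `F` joining two points if the balls of radius `ρ` about them overlap, expressed
by the distance of the centres. -/
def ballGraph (ρ : X → ℝ) (F : Set X) : SimpleGraph F where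
  Adj x y := x ≠ y ∧ dist (x : X) y < ρ x + ρ y
  symm := ⟨fun x y h => ⟨h.1.symm, by rw [dist_comm, add_comm]; exact h.2⟩⟩
  loopless := ⟨fun _ h => h.1 rfl⟩

theorem reachable_ballGraph_of_mem_ball {x y : F} {z : X} (hx : z ∈ ball (x : X) (ρ x))
    (hy : z ∈ ball (y : X) (ρ y)) : (ballGraph ρ F).Reachable x y := by
  obtain rfl | hxy := eq_or_ne x y
  · exact .refl _
  · exact SimpleGraph.Adj.reachable
      ⟨hxy, (dist_triangle_left (x : X) y z).trans_lt (add_lt_add hx hy)⟩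

/-- Otherwise the balls about the vertices reachable from `v` would split off a piece of `C` not
containing `a`. -/
theorem infinite_setOf_reachable_ballGraph (hC : IsPreconnected C) (ha : a ∈ C)
    (hF : C \ {a} ⊆ ⋃ x ∈ F, ball x (ρ x)) (hρ : ∀ x ∈ F, ρ x < dist x a) {v : F}
    (hv : (C ∩ ball v (ρ v)).Nonempty) : {w | (ballGraph ρ F).Reachable v w}.Infinite := by
  intro hfin
  let B : Set F → Set X := fun S => ⋃ x ∈ S, ball (x : X) (ρ x)
  have hB : ∀ S, IsOpen (B S) := fun S => isOpen_biUnion fun _ _ => isOpen_ball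
  let S : Set F := {w | (ballGraph ρ F).Reachable v w}
  let N : Set X := ⋃ x ∈ S, closedBall (x : X) (ρ x)
  have hN : IsClosed N := hfin.isClosed_biUnion fun _ _ => isClosed_closedBall
  have hBN : B S ⊆ N := iUnion₂_mono fun _ _ => ball_subset_closedBall
  have haN : a ∉ N := by
    simp only [N, mem_iUnion₂, mem_closedBall, dist_comm a, not_exists, not_le]
    exact fun x _ => hρ x x.2
  have hdisj : Disjoint (B S) (B Sᶜ) := by
    refine disjoint_left.2 fun z hz hz' => ?_
    obtain ⟨x, hx, hzx⟩ := mem_iUnion₂.1 hz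
    obtain ⟨y, hy, hzy⟩ := mem_iUnion₂.1 hz'
    exact hy (hx.trans (reachable_ballGraph_of_mem_ball hzx hzy))
  have hcover : C ⊆ B S ∪ (B Sᶜ ∪ Nᶜ) := by
    intro z hz
    by_cases hza : z = a
    · exact Or.inr (Or.inr (hza ▸ haN))
    · obtain ⟨x, hx, hzx⟩ := mem_iUnion₂.1 (hF ⟨hz, hza⟩)
      by_cases hxS : (⟨x, hx⟩ : F) ∈ S
      · exact Or.inl (mem_biUnion (s := S) hxS hzx)
      · exact Or.inr (Or.inl (mem_biUnion (s := Sᶜ) hxS hzx))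
  have hCS : (C ∩ B S).Nonempty := hv.mono <| inter_subset_inter_right _ fun z hz =>
    mem_biUnion (SimpleGraph.Reachable.refl v) hz
  obtain ⟨z, -, hzS, hz | hz⟩ := hC _ _ (hB S) ((hB Sᶜ).union hN.isOpen_compl) hcover hCS
    ⟨a, ha, Or.inr haN⟩
  · exact hdisj.ne_of_mem hzS hz rfl
  · exact hz (hBN hzS)

end BallGraph

section ExistsBallChain

variable {X : Type*} [MetricSpace X] {C F : Set X} {a : X} {ρ : X → ℝ}

theorem finite_neighborSet_ballGraph (hFa : a ∉ F)
    (hF : ∀ r > 0, (F ∩ {x | r ≤ dist x a}).Finite) (hρ : ∀ x ∈ F, ρ x ≤ dist x a / 2) (v : F) :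
    ((ballGraph ρ F).neighborSet v).Finite := by
  have hva : 0 < dist (v : X) a := dist_pos.2 fun h => hFa (h ▸ v.2)
  refine Finite.of_finite_image ((hF (dist (v : X) a / 3) (by positivity)).subset ?_)
    Subtype.val_injective.injOn
  rintro _ ⟨w, ⟨-, hvw⟩, rfl⟩
  refine ⟨w.2, show dist (v : X) a / 3 ≤ dist (w : X) a from ?_⟩
  linarith [hρ v v.2, hρ w w.2, dist_triangle (v : X) w a]

theorem exists_net_accumulating_at (hC : IsCompact C) (hρ : ∀ z ∈ C \ {a}, 0 < ρ z) :
    ∃ F ⊆ C \ {a}, (∀ r > 0, (F ∩ {x | r ≤ dist x a}).Finite) ∧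
      C \ {a} ⊆ ⋃ x ∈ F, ball x (ρ x) := by
  let T : ℕ → Set X := fun n => C ∩ {z | n * dist z a ≤ 1 ∧ 1 ≤ (n + 1) * dist z a}
  have hTC : ∀ n, T n ⊆ C \ {a} := by
    rintro n z ⟨hz, -, hza⟩
    refine ⟨hz, fun h => ?_⟩
    rw [mem_singleton_iff.1 h, dist_self, mul_zero] at hza
    exact zero_lt_one.not_ge hza
  have hT : ∀ n, IsCompact (T n) := fun n => hC.inter_right <| by
    simp only [ofPred_and]
    exact (isClosed_le (by fun_prop) (by fun_prop)).inter (isClosed_le (by fun_prop) (by fun_prop))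
  have hcover (n : ℕ) := (hT n).elim_nhds_subcover (fun x => ball x (ρ x))
    fun x hx => ball_mem_nhds x (hρ x (hTC n hx))
  choose S hST hS using hcover
  refine ⟨⋃ n, S n, iUnion_subset fun n x hx => hTC n (hST n x hx), fun r hr => ?_, fun z hz => ?_⟩
  · refine ((finite_le_nat ⌊r⁻¹⌋₊).biUnion fun n _ => (S n).finite_toSet).subset ?_
    rintro x ⟨hx, hrx⟩
    obtain ⟨n, hn⟩ := mem_iUnion.1 hx
    refine mem_biUnion (Nat.le_floor ?_) hn
    have hnr : n * r ≤ 1 :=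
      (mul_le_mul_of_nonneg_left hrx n.cast_nonneg).trans (hST n x hn).2.1
    rwa [← one_div, le_div_iff₀ hr]
  · have hza : 0 < dist z a := dist_pos.2 hz.2
    have hzT : z ∈ T ⌊(dist z a)⁻¹⌋₊ := by
      refine ⟨hz.1, ?_, ?_⟩
      · rw [← le_div_iff₀ hza, one_div]
        exact Nat.floor_le (by positivity)
      · rw [← div_le_iff₀ hza, one_div]
        exact (Nat.lt_floor_add_one _).le
    obtain ⟨x, hx, hzx⟩ := mem_iUnion₂.1 (hS _ hzT)
    exact mem_biUnion (mem_iUnion_of_mem _ hx) hzx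

theorem exists_isBallChain (hC : IsCompact C) (hC' : IsPreconnected C) (ha : a ∈ C)
    (hpos : ∀ z ∈ C \ {a}, 0 < ρ z) (hρ : ∀ z ∈ C \ {a}, ρ z ≤ dist z a / 2) {p : X}
    (hp : p ∈ C \ {a}) :
    ∃ c : ℕ → X, IsBallChain ρ c ∧ (∀ n, c n ∈ C \ {a}) ∧ p ∈ ball (c 0) (ρ (c 0)) ∧
      Tendsto c atTop (𝓝 a) := by
  obtain ⟨F, hFC, hF, hcover⟩ := exists_net_accumulating_at hC hpos
  obtain ⟨v, hv, hpv⟩ := mem_iUnion₂.1 (hcover hp)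
  have hρlt : ∀ x ∈ F, ρ x < dist x a := fun x hx =>
    (hρ x (hFC hx)).trans_lt (half_lt_self (dist_pos.2 (hFC hx).2))
  obtain ⟨c, hc0, hadj, hdist⟩ := exists_geodesic_ray
    (finite_neighborSet_ballGraph (fun h => (hFC h).2 rfl) hF fun x hx => hρ x (hFC hx))
    (infinite_setOf_reachable_ballGraph hC' ha hcover hρlt (v := ⟨v, hv⟩) ⟨p, hp.1, hpv⟩)
  have hinj : Function.Injective fun n => (c n : X) := fun i j hij => by
    rw [← hdist i, ← hdist j, Subtype.ext hij]
  refine ⟨fun n => c n, ⟨fun n => (hadj n).2, fun {i j} hij => ?_⟩, fun n => hFC (c n).2, ?_, ?_⟩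
  · refine le_of_not_gt fun hlt => ?_
    have := le_succ_of_adj_of_dist_eq hdist (i := i) (j := j)
      ⟨fun h => by have := hinj (congrArg Subtype.val h); lia, hlt⟩
    lia
  · simpa only [hc0] using hpv
  · rw [nhds_basis_ball.tendsto_right_iff]
    intro r hr
    rw [← Nat.cofinite_eq_atTop]
    exact ((hF r hr).preimage hinj.injOn).subset fun n hn =>
      ⟨(c n).2, show r ≤ dist (c n : X) a from le_of_not_gt hn⟩

end ExistsBallChain

theorem Accessible.mono {U V : Set ℂ} {a : ℂ} (h : Accessible U a) (hUV : U ⊆ V) :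
    Accessible V a :=
  let ⟨γ, hγ, hinj, h1, hU⟩ := h
  ⟨γ, hγ, hinj, h1, hU.trans hUV⟩

theorem accessible_connectedComponentIn {U C : Set ℂ} (hU : IsOpen U) (hC : IsCompact C)
    (hC' : IsPreconnected C) {a p : ℂ} (ha : a ∈ C) (haU : a ∉ U) (hCU : C \ {a} ⊆ U)
    (hp : p ∈ C \ {a}) : Accessible (connectedComponentIn U p) a := by
  let ρ : ℂ → ℝ := fun z => infDist z Uᶜ / 2
  have hρlip : LipschitzWith 1 ρ := .of_le_add fun x y => by
    have := infDist_le_infDist_add_dist (s := Uᶜ) (x := x) (y := y)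
    have := dist_nonneg (x := x) (y := y)
    simp only [ρ]
    linarith
  have hρle : ∀ z, ∀ y ∈ Uᶜ, ρ z ≤ dist z y / 2 := fun z y hy =>
    div_le_div_of_nonneg_right (infDist_le_dist_of_mem hy) zero_le_two
  have hρpos : ∀ z ∈ C \ {a}, 0 < ρ z := fun z hz =>
    half_pos ((hU.isClosed_compl.notMem_iff_infDist_pos ⟨a, haU⟩).1 (notMem_compl_iff.2 (hCU hz)))
  obtain ⟨c, hc, hcC, hpc, hlim⟩ :=
    exists_isBallChain hC hC' ha hρpos (fun z _ => hρle z a haU) hp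
  have hballU : ⋃ n, ball (c n) (ρ (c n)) ⊆ U := iUnion_subset fun n y hy => by
    by_contra hyU
    linarith [hρle (c n) y hyU, mem_ball'.1 hy, hρpos _ (hcC n)]
  refine (hc.accessible_iUnion_ball hρlip hlim fun n => ?_).mono
    ((hc.isPreconnected_iUnion_ball fun n => hρpos _ (hcC n)).subset_connectedComponentIn
      (mem_iUnion_of_mem 0 hpc) hballU)
  exact (hρle _ a haU).trans (half_le_self dist_nonneg)

theorem subset_unbddComp_of_isPreconnected {K S : Set ℂ} (hS : IsPreconnected S) (hSK : S ⊆ Kᶜ)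
    (hSb : ¬ Bornology.IsBounded S) : S ⊆ unbddComp K := fun _ hz =>
  ⟨hSK hz, fun hb => hSb (hb.subset (hS.subset_connectedComponentIn hz hSK))⟩

theorem connectedComponentIn_subset_unbddComp {K : Set ℂ} {p : ℂ} (hp : p ∈ unbddComp K) :
    connectedComponentIn Kᶜ p ⊆ unbddComp K :=
  subset_unbddComp_of_isPreconnected isPreconnected_connectedComponentIn
    (connectedComponentIn_subset _ _) hp.2

theorem compl_subset_unbddComp_frontier {X : Set ℂ} (hX : IsCompact X) (hXc : IsPreconnected Xᶜ) :
    Xᶜ ⊆ unbddComp (frontier X) :=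
  subset_unbddComp_of_isPreconnected hXc (compl_subset_compl.2 hX.isClosed.frontier_subset)
    fun hb => NormedSpace.unbounded_univ ℝ ℂ (union_compl_self X ▸ hX.isBounded.union hb)

theorem compl_ball_subset_unbddComp {K : Set ℂ} {a : ℂ} {R : ℝ} (hR : 0 < R) (hK : K ⊆ ball a R) :
    (ball a R)ᶜ ⊆ unbddComp K := by
  intro p hp
  have hpR : R ≤ ‖p - a‖ := by simpa [dist_eq_norm] using hp
  let ray : ℝ → ℂ := fun t => a + t • (p - a)
  have hray : ∀ t, 0 ≤ t → dist (ray t) a = t * ‖p - a‖ := fun t ht => by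
    rw [dist_eq_norm, add_sub_cancel_left, norm_smul, Real.norm_of_nonneg ht]
  refine subset_unbddComp_of_isPreconnected (S := ray '' Ici 1)
    (isPreconnected_Ici.image _ (by fun_prop)) ?_ (fun hb => ?_) ⟨1, self_mem_Ici, by simp [ray]⟩
  · rintro _ ⟨t, ht, rfl⟩ htK
    have := mem_ball.1 (hK htK)
    rw [hray t (zero_le_one.trans ht)] at this
    exact this.not_ge (hpR.trans (le_mul_of_one_le_left (norm_nonneg _) ht))
  · obtain ⟨M, hM⟩ := hb.subset_closedBall a
    obtain ⟨t, ht, htM⟩ := ((eventually_ge_atTop 1).and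
      ((tendsto_id.atTop_mul_const (hR.trans_le hpR)).eventually_gt_atTop M)).exists
    exact htM.not_ge ((hray t (zero_le_one.trans ht)).symm.trans_le (hM (mem_image_of_mem _ ht)))

theorem accessible_unbddComp_of_hasContinuousLog {K : Set ℂ} (hK : IsCompact K) {a : ℂ}
    (ha : a ∈ K) (hlog : HasContinuousLog fun z : ↥(K \ {a}) => (z : ℂ) - a) :
    Accessible (unbddComp K) a := by
  obtain ⟨R, hR, hKR⟩ := hK.isBounded.subset_ball_lt 0 a
  obtain ⟨C, hC, hC', haC, hCK, p, hpC, hpR⟩ :=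
    exists_continuum_of_hasContinuousLog hK.isClosed hlog hR.le
  have hpa : p ≠ a := ne_of_mem_sphere hpR hR.ne'
  have hp : p ∈ unbddComp K :=
    compl_ball_subset_unbddComp hR hKR fun h => (mem_ball.1 h).ne hpR
  exact (accessible_connectedComponentIn hK.isClosed.isOpen_compl hC hC' haC
    (notMem_compl_iff.2 ha) hCK ⟨hpC, hpa⟩).mono (connectedComponentIn_subset_unbddComp hp)

/-- For `‖y‖ < ‖q‖` write `y - q = (-q) (1 - y / q)`, the second factor being in the slit plane. -/
theorem hasContinuousLog_sub_of_norm_lt {Y : Type*} [TopologicalSpace Y] {f : Y → ℂ}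
    (hf : Continuous f) {q : ℂ} (hq : ∀ y, ‖f y‖ < ‖q‖) : HasContinuousLog fun y => f y - q := by
  rcases isEmpty_or_nonempty Y with hY | ⟨⟨y₀⟩⟩
  · exact ⟨0, hY.elim⟩
  have hq0 : q ≠ 0 := norm_pos_iff.1 ((norm_nonneg _).trans_lt (hq y₀))
  have hslit : ∀ y, 1 + -(f y / q) ∈ Complex.slitPlane := fun y =>
    Complex.mem_slitPlane_of_norm_lt_one <| by
      rw [norm_neg, norm_div, div_lt_one (norm_pos_iff.2 hq0)]
      exact hq y
  convert (HasContinuousLog.const (neg_ne_zero.2 hq0)).mul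
    (HasContinuousLog.of_mem_slitPlane (by fun_prop) hslit) using 1
  ext y
  simp only [Pi.mul_apply]
  field_simp
  ring

theorem hasContinuousLog_sub_of_joinedIn {Y : Type*} [TopologicalSpace Y] {f : Y → ℂ}
    (hf : Continuous f) {p q : ℂ} (hpq : JoinedIn (range f)ᶜ p q)
    (hp : HasContinuousLog fun y => f y - p) : HasContinuousLog fun y => f y - q := by
  obtain ⟨γ, hγ⟩ := hpq
  simpa using HasContinuousLog.of_homotopy (F := fun x => f x.2 - γ x.1) (by fun_prop)
    (fun x => sub_ne_zero.2 fun h => hγ x.1 ⟨x.2, h⟩) (by simpa using hp)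

theorem joinedIn_of_mem_connectedComponentIn {U : Set ℂ} (hU : IsOpen U) {p q : ℂ} (hp : p ∈ U)
    (hq : q ∈ connectedComponentIn U p) : JoinedIn U p q :=
  ((hU.connectedComponentIn.isConnected_iff_isPathConnected.1
    (isConnected_connectedComponentIn_iff.2 hp)).joinedIn p (mem_connectedComponentIn hp) q hq).mono
    (connectedComponentIn_subset U p)

theorem Accessible.exists_joinedIn {U : Set ℂ} {a : ℂ} (h : Accessible U a) :
    ∃ p ∈ U, JoinedIn (insert a U) p a := by
  obtain ⟨γ, hγ, -, rfl, hU⟩ := h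
  have h0 : γ 0 ∈ U := hU (mem_image_of_mem γ ⟨le_rfl, zero_lt_one⟩)
  refine ⟨γ 0, h0, JoinedIn.ofLine hγ rfl rfl ?_⟩
  rw [unitInterval, ← Ico_insert_right zero_le_one, image_insert_eq]
  exact insert_subset_insert hU

theorem hasContinuousLog_of_accessible_unbddComp {K : Set ℂ} (hK : IsCompact K) {a : ℂ}
    (hacc : Accessible (unbddComp K) a) : HasContinuousLog fun z : ↥(K \ {a}) => (z : ℂ) - a := by
  obtain ⟨p, hp, hpa⟩ := hacc.exists_joinedIn
  obtain ⟨M, hM⟩ := hK.isBounded.subset_closedBall 0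
  obtain ⟨q, hq, hqM⟩ : ∃ q ∈ connectedComponentIn Kᶜ p, M < ‖q‖ := by
    by_contra! hcon
    exact hp.2 (isBounded_closedBall.subset fun q hq => mem_closedBall_zero_iff.2 (hcon q hq))
  have hqp : JoinedIn Kᶜ q p :=
    (joinedIn_of_mem_connectedComponentIn hK.isClosed.isOpen_compl hp.1 hq).symm
  have hqlog := hasContinuousLog_sub_of_norm_lt (f := fun z : ↥(K \ {a}) => (z : ℂ))
    continuous_subtype_val fun z => (mem_closedBall_zero_iff.1 (hM z.2.1)).trans_lt hqM
  have hqa : JoinedIn (range fun z : ↥(K \ {a}) => (z : ℂ))ᶜ q a := by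
    rw [Subtype.range_coe]
    refine (hqp.mono (compl_subset_compl.2 sdiff_subset)).trans (hpa.mono ?_)
    rintro z (rfl | hz) hz'
    exacts [hz'.2 rfl, hz.1 hz'.1]
  exact hasContinuousLog_sub_of_joinedIn continuous_subtype_val hqa hqlog

theorem accessible_unbddComp_iff {K : Set ℂ} (hK : IsCompact K) {a : ℂ} (ha : a ∈ K) :
    Accessible (unbddComp K) a ↔ HasContinuousLog fun z : ↥(K \ {a}) => (z : ℂ) - a :=
  ⟨hasContinuousLog_of_accessible_unbddComp hK, accessible_unbddComp_of_hasContinuousLog hK ha⟩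

theorem accessible_unbddComp_image_iff {Y : Type*} [TopologicalSpace Y] {K : Set Y} {f : Y → ℂ}
    (hK : IsCompact K) (hf : ContinuousOn f K) (hinj : InjOn f K) {x : Y} (hx : x ∈ K) :
    Accessible (unbddComp (f '' K)) (f x) ↔ HasContinuousLog fun z : ↥(K \ {x}) => f z - f x := by
  have : CompactSpace K := isCompact_iff_compactSpace.1 hK
  have hemb : IsEmbedding fun z : ↥(K \ {x}) => f z :=
    (hf.domRestrict.isClosedEmbedding hinj.injective).isEmbedding.comp (.inclusion sdiff_subset)
  have hrange : range (fun z : ↥(K \ {x}) => f z) = f '' K \ {f x} := by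
    rw [← image_singleton, ← hinj.image_sdiff_subset (singleton_subset_iff.2 hx)]
    exact range_domRestrict f _
  rw [accessible_unbddComp_iff (hK.image_of_continuousOn hf) (mem_image_of_mem f hx), ← hrange]
  exact HasContinuousLog.range_iff hemb (f := fun w => w - f x)

theorem accessible_preserved_general {Y T : Type*} [TopologicalSpace Y] [TopologicalSpace T]
    {K : Set Y} {I : Set T} {h : Y → T → ℂ} (hK : IsCompact K)
    (hcont : ContinuousOn (fun p : Y × T => h p.1 p.2) (K ×ˢ I))
    (hinj : ∀ t ∈ I, InjOn (fun z => h z t) K) {x : Y} (hx : x ∈ K) {s t : T}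
    (hst : JoinedIn I s t) (hacc : Accessible (unbddComp ((fun z => h z s) '' K)) (h x s)) :
    Accessible (unbddComp ((fun z => h z t) '' K)) (h x t) := by
  have hslice : ∀ r ∈ I, ContinuousOn (fun z => h z r) K := fun r hr =>
    hcont.comp (f := fun z => (z, r)) (by fun_prop) fun z hz => ⟨hz, hr⟩
  rw [accessible_unbddComp_image_iff hK (hslice s hst.source_mem) (hinj s hst.source_mem) hx]
    at hacc
  rw [accessible_unbddComp_image_iff hK (hslice t hst.target_mem) (hinj t hst.target_mem) hx]
  obtain ⟨γ, hγ⟩ := hst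
  let F : unitInterval × ↥(K \ {x}) → ℂ := fun p => h p.2 (γ p.1) - h x (γ p.1)
  have hF : Continuous F :=
    (hcont.comp_continuous (f := fun p : unitInterval × ↥(K \ {x}) => ((p.2 : Y), γ p.1))
      (by fun_prop) fun p => ⟨p.2.2.1, hγ p.1⟩).sub
    (hcont.comp_continuous (f := fun p : unitInterval × ↥(K \ {x}) => (x, γ p.1))
      (by fun_prop) fun p => ⟨hx, hγ p.1⟩)
  have hF0 : ∀ p, F p ≠ 0 := fun p => sub_ne_zero.2 ((hinj _ (hγ p.1)).ne p.2.2.1 hx p.2.2.2)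
  simpa [F] using HasContinuousLog.of_homotopy hF hF0 (by simpa [F] using hacc)

/-- Accessibility of a boundary point of a non-separating plane continuum
is preserved by an isotopy of the boundary starting at the identity. -/
theorem accessible_preserved
    (X : Set ℂ) (hXne : X.Nonempty) (hXcpt : IsCompact X) (hXconn : IsConnected X)
    (hXns : IsConnected Xᶜ)
    (h : ℂ → ℝ → ℂ)
    (hcont : ContinuousOn (fun p : ℂ × ℝ => h p.1 p.2) (frontier X ×ˢ Set.Icc 0 1))
    (hinj : ∀ t ∈ Set.Icc (0:ℝ) 1, Set.InjOn (fun z => h z t) (frontier X))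
    (hid : ∀ z ∈ frontier X, h z 0 = z)
    (x : ℂ) (hx : x ∈ frontier X) (hacc : Accessible Xᶜ x) :
    ∀ t ∈ Set.Icc (0:ℝ) 1,
      Accessible (unbddComp ((fun z => h z t) '' frontier X)) (h x t) := by
  intro t ht
  have hfr : IsCompact (frontier X) :=
    hXcpt.of_isClosed_subset isClosed_frontier hXcpt.isClosed.frontier_subset
  have hjoin : JoinedIn (Icc (0 : ℝ) 1) 0 t :=
    ((convex_Icc 0 1).isPathConnected ⟨t, ht⟩).joinedIn 0 ⟨le_rfl, zero_le_one⟩ t ht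
  refine accessible_preserved_general hfr hcont hinj hx hjoin ?_
  rw [image_congr hid, image_id', hid x hx]
  exact hacc.mono (compl_subset_unbddComp_frontier hXcpt hXns.isPreconnected)
end

section
/- Let X ⊂ ℂ be a non-separating continuum with 0 ∈ Bd(X) and X ⊂ B(0,1), and let C and D be distinct components of X̂. Then: (i) the relation 'C lies above D' is independent of the path chosen, i.e., if s₁, s₂ : [0,1] → {z : Re z ≤ 0} \ C are paths with s_i(0) ∈ D and s_i(1) = 0, and R_i = s_i([0,1]) ∪ [0,∞), then C is contained in the unbounded component of ℂ \ (D ∪ R₁) containing 1 + 2πi if and only if C is contained in the unbounded component of ℂ \ (D ∪ R₂) containing 1 + 2πi; (ii) either C lies above D or D lies above C. -/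
open Set Metric Topology Filter

/-- The set of connected components of a set `S`. -/
def componentsOf {α : Type*} [TopologicalSpace α] (S : Set α) : Set (Set α) :=
  {C | ∃ x ∈ S, C = connectedComponentIn S x}

/-- `X̂ = exp⁻¹(X \ {0})`. -/
def hatSet (X : Set ℂ) : Set ℂ := Complex.exp ⁻¹' (X \ {0})

/-- The conditions on the path `s` in the definition of "C lies above D":
`s : [0,1] → {z : Re z ≤ 0} \ C`, `s 0 ∈ D`, `s 1 = 0`. -/
def AbovePath (C D : Set ℂ) (s : ℝ → ℂ) : Prop :=
  ContinuousOn s (Set.Icc 0 1) ∧ (∀ u ∈ Set.Icc (0:ℝ) 1, (s u).re ≤ 0 ∧ s u ∉ C) ∧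
    s 0 ∈ D ∧ s 1 = 0

/-- The ray `R = s([0,1]) ∪ [0,∞)` associated to the path `s`. -/
def AboveRay (s : ℝ → ℂ) : Set ℂ := s '' Set.Icc 0 1 ∪ (Complex.ofReal '' Set.Ici 0)

/-- `C` is contained in the unbounded component of `ℂ \ (D ∪ R)` containing `1 + 2πi`. -/
def AboveVia (C D : Set ℂ) (s : ℝ → ℂ) : Prop :=
  ¬ Bornology.IsBounded
      (connectedComponentIn (D ∪ AboveRay s)ᶜ ((1 : ℂ) + 2 * (Real.pi : ℂ) * Complex.I)) ∧
  C ⊆ connectedComponentIn (D ∪ AboveRay s)ᶜ ((1 : ℂ) + 2 * (Real.pi : ℂ) * Complex.I)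

/-- `C` lies above `D`. -/
def LiesAbove (C D : Set ℂ) : Prop := ∃ s : ℝ → ℂ, AbovePath C D s ∧ AboveVia C D s

/-!
The proof rests on Borsuk's separation criterion: if `K` is closed and `c, q ∉ K`, then `c` lies in
the component of `q` in `Kᶜ` exactly when `(z - c) / (z - q)` has a continuous logarithm on `K` that
tends to `0` at infinity. If `C` is closed, connected, unbounded and does not separate the plane,
then `Cᶜ` is simply connected, so `z - c` with `c ∈ C` has a logarithm on all of `Cᶜ`.

Path independence: the two sets `D ∪ R₁` and `D ∪ R₂` lie in the domain of one logarithm of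
`(z - c) / (z - (1 + 2πi))` and differ by a bounded set, so the criterion has the same answer for
both.

Totality: that logarithm tends to multiples `2πim` and `2πin` of `2πi` along the two ends `D` and
`[0,∞)` of `D ∪ R`. Multiplying by the `(n - m)`-th power of
`(z - (1 - 2πi)) / (z - (1 + 2πi))`, whose logarithm changes by `2πi` between the two ends, makes
both limits equal. The zero-counting argument behind the criterion then puts `c` in the component of
`1 + 2πi` or in that of `1 - 2πi`. In the second case a path from `c` to `1 - 2πi` off `D ∪ R`,
folded onto the left half-plane and continued up the imaginary axis to `0`, becomes a path for the
pair `(D, C)`, and the path from `D` to `0` passes above it.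
-/

section Components

variable {α : Type*} [TopologicalSpace α]

theorem mem_connectedComponentIn_of_mem_closure {F : Set α} {x z : α}
    (hz : z ∈ closure (connectedComponentIn F x)) (hzF : z ∈ F) : z ∈ connectedComponentIn F x := by
  by_cases hx : x ∈ F
  · have hpre : IsPreconnected (insert z (connectedComponentIn F x)) :=
      isPreconnected_connectedComponentIn.subset_closure (subset_insert _ _)
        (insert_subset hz subset_closure)
    exact hpre.subset_connectedComponentIn (mem_insert_of_mem _ (mem_connectedComponentIn hx))
      (insert_subset hzF (connectedComponentIn_subset _ _)) (mem_insert _ _)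
  · simp [connectedComponentIn_eq_empty hx] at hz

theorem isClosed_connectedComponentIn {F : Set α} (hF : IsClosed F) (x : α) :
    IsClosed (connectedComponentIn F x) :=
  isClosed_of_closure_subset fun _ hz => mem_connectedComponentIn_of_mem_closure hz
    (hF.closure_subset_iff.2 (connectedComponentIn_subset _ _) hz)

theorem frontier_connectedComponentIn_subset [LocallyConnectedSpace α] {F : Set α} (hF : IsOpen F)
    (x : α) : frontier (connectedComponentIn F x) ⊆ Fᶜ := by
  rw [hF.connectedComponentIn.frontier_eq]
  exact fun z hz hzF => hz.2 (mem_connectedComponentIn_of_mem_closure hz.1 hzF)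

theorem disjoint_of_mem_componentsOf {S C D : Set α} (hC : C ∈ componentsOf S)
    (hD : D ∈ componentsOf S) (hCD : C ≠ D) : Disjoint C D := by
  obtain ⟨x, -, rfl⟩ := hC
  obtain ⟨y, -, rfl⟩ := hD
  exact disjoint_left.2 fun _ hzx hzy =>
    hCD ((connectedComponentIn_eq hzx).trans (connectedComponentIn_eq hzy).symm)

theorem isConnected_compl_connectedComponentIn [LocallyConnectedSpace α] [PreconnectedSpace α]
    {Y : Set α} (hY : IsClosed Y) (hYc : IsConnected Yᶜ) (x : α) :
    IsConnected (connectedComponentIn Y x)ᶜ := by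
  set C := connectedComponentIn Y x
  have hYC : Yᶜ ⊆ Cᶜ := compl_subset_compl.2 (connectedComponentIn_subset _ _)
  have hCo : IsOpen Cᶜ := (isClosed_connectedComponentIn hY x).isOpen_compl
  obtain ⟨b, hb⟩ := hYc.nonempty
  refine ⟨⟨b, hYC hb⟩, isPreconnected_of_forall b fun z hz => ?_⟩
  refine ⟨connectedComponentIn Cᶜ z, connectedComponentIn_subset _ _, ?_,
    mem_connectedComponentIn hz, isPreconnected_connectedComponentIn⟩
  set V := connectedComponentIn Cᶜ z
  by_contra hbV
  -- `V` misses `Yᶜ`, and it touches `C`; so `C ∪ V ⊆ Y` would be connected.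
  have hVY : V ⊆ Y := fun w hwV => by_contra fun hwY => hbV <| by
    rw [show V = _ from connectedComponentIn_eq hwV]
    exact hYc.isPreconnected.subset_connectedComponentIn hwY hYC hb
  obtain ⟨w, hw⟩ : (frontier V).Nonempty :=
    nonempty_frontier_iff.2 ⟨⟨z, mem_connectedComponentIn hz⟩, fun h => hbV (h ▸ mem_univ b)⟩
  have hwC : w ∈ C := not_not.1 (frontier_connectedComponentIn_subset hCo z hw)
  have hVC : closure V ⊆ C := by
    rw [show C = _ from connectedComponentIn_eq hwC]
    exact isPreconnected_connectedComponentIn.closure.subset_connectedComponentIn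
      (frontier_subset_closure hw) (hY.closure_subset_iff.2 hVY)
  exact hz (hVC (subset_closure (mem_connectedComponentIn hz)))

theorem exists_isOpen_isCompact_inter_of_isCompact_connectedComponentIn [T2Space α]
    [LocallyCompactSpace α] {S : Set α} (hS : IsClosed S) {x : α} (hx : x ∈ S)
    (hcomp : IsCompact (connectedComponentIn S x)) :
    ∃ O, IsOpen O ∧ x ∈ O ∧ IsCompact (S ∩ O) := by
  obtain ⟨N, hN, hsub⟩ := exists_compact_superset hcomp
  have hxN : x ∈ N := interior_subset (hsub (mem_connectedComponentIn hx))
  have : CompactSpace ↑(S ∩ N) := isCompact_iff_compactSpace.1 (hN.inter_left hS)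
  let x' : ↑(S ∩ N) := ⟨x, hx, hxN⟩
  have hsub' : connectedComponent x' ⊆ Subtype.val ⁻¹' interior N := by
    refine image_subset_iff.1 (Subset.trans ?_ hsub)
    exact (isPreconnected_connectedComponent.image _ continuous_subtype_val.continuousOn)
      |>.subset_connectedComponentIn ⟨x', mem_connectedComponent, rfl⟩
        (image_subset_iff.2 fun y _ => y.2.1)
  obtain ⟨Z, hZ, hxZ, hZN⟩ : ∃ Z : Set ↑(S ∩ N), IsClopen Z ∧ x' ∈ Z ∧
      Z ⊆ Subtype.val ⁻¹' interior N := by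
    rw [connectedComponent_eq_iInter_isClopen] at hsub'
    have : Nonempty {Z : Set ↑(S ∩ N) // IsClopen Z ∧ x' ∈ Z} := ⟨univ, isClopen_univ, trivial⟩
    obtain ⟨⟨Z, hZ, hxZ⟩, hZN⟩ := exists_subset_nhds_of_isCompact'
      (V := fun Z : {Z : Set ↑(S ∩ N) // IsClopen Z ∧ x' ∈ Z} => Z.1)
      (fun Z W => ⟨⟨Z.1 ∩ W.1, Z.2.1.inter W.2.1, Z.2.2, W.2.2⟩, inter_subset_left,
        inter_subset_right⟩)
      (fun Z => Z.2.1.isClosed.isCompact) (fun Z => Z.2.1.isClosed)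
      fun y hy => (isOpen_interior.preimage continuous_subtype_val).mem_nhds (hsub' hy)
    exact ⟨Z, hZ, hxZ, hZN⟩
  obtain ⟨O, hO, rfl⟩ := isOpen_induced_iff.1 hZ.isOpen
  refine ⟨O ∩ interior N, hO.inter isOpen_interior, ⟨hxZ, hZN hxZ⟩, ?_⟩
  convert! hZ.isClosed.isCompact.image continuous_subtype_val using 1
  ext z
  exact ⟨fun hz => ⟨⟨z, hz.1, interior_subset hz.2.2⟩, hz.2.1, rfl⟩,
    by rintro ⟨z, hz, rfl⟩; exact ⟨z.2.1, hz, hZN hz⟩⟩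

theorem subset_range_of_isCompact_connectedComponentIn_preimage {β : Type*} [TopologicalSpace β]
    [T2Space α] [LocallyCompactSpace α] [T2Space β] {f : α → β} (hf : Continuous f)
    (hfo : IsOpenMap f) {X : Set β} (hX : IsClosed X) (hXc : IsPreconnected X) {x : α}
    (hx : f x ∈ X) (hcomp : IsCompact (connectedComponentIn (f ⁻¹' X) x)) : X ⊆ range f := by
  obtain ⟨O, hO, hxO, hcpt⟩ :=
    exists_isOpen_isCompact_inter_of_isCompact_connectedComponentIn (hX.preimage hf) hx hcomp
  have himage : f '' (f ⁻¹' X ∩ O) = X ∩ f '' O := by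
    rw [inter_comm, image_inter_preimage, inter_comm]
  have hclosed : IsClosed (X ∩ f '' O) := himage ▸ (hcpt.image hf).isClosed
  by_contra hne
  obtain ⟨y, hyX, hy⟩ := not_subset.1 hne
  obtain ⟨z, hzX, hzO, hz⟩ := hXc (f '' O) (X ∩ f '' O)ᶜ (hfo O hO) hclosed.isOpen_compl
    (fun w _ => (em (w ∈ f '' O)).imp_right fun hwO hw => hwO hw.2)
    ⟨f x, hx, x, hxO, rfl⟩ ⟨y, hyX, fun hyO => hy (image_subset_range _ _ hyO.2)⟩
  exact hz ⟨hzX, hzO⟩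

end Components

section ContinuousLog

theorem sub_eq_sub_of_exp_eq_exp {A : Type*} [TopologicalSpace A] {S : Set A} {f g : A → ℂ}
    (hS : IsPreconnected S) (hf : ContinuousOn f S) (hg : ContinuousOn g S)
    (h : ∀ z ∈ S, Complex.exp (f z) = Complex.exp (g z)) {a b : A} (ha : a ∈ S) (hb : b ∈ S) :
    f a - g a = f b - g b := by
  have hexp : ∀ z ∈ S, Complex.exp (f z - g z) = 1 := fun z hz => by
    rw [Complex.exp_sub, h z hz, div_self (Complex.exp_ne_zero _)]
  exact Complex.isCoveringMap_exp.constOn_of_comp (g := fun z => f z - g z) hS (hf.sub hg)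
    (fun z hz w hw => Subtype.ext ((hexp z hz).trans (hexp w hw).symm)) ha hb

open unitInterval in
theorem map_one_sub_map_zero_of_exp_eq_exp {A : Type*} [TopologicalSpace A] {K : Set A} {f : A → ℂ}
    (hf : ContinuousOn f K) {γ : I → A} (hγ : Continuous γ) (hγK : ∀ t, γ t ∈ K) {Γ : I → ℂ}
    (hΓ : Continuous Γ) (h : ∀ t, Complex.exp (Γ t) = Complex.exp (f (γ t))) :
    Γ 1 - Γ 0 = f (γ 1) - f (γ 0) := by
  have := sub_eq_sub_of_exp_eq_exp isPreconnected_univ hΓ.continuousOn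
    (hf.comp_continuous hγ hγK).continuousOn (fun t _ => h t) (mem_univ 1) (mem_univ 0)
  exact (sub_eq_sub_iff_sub_eq_sub).1 this

open unitInterval in
theorem exists_continuousOn_log_of_forall_isCompact {A : Type*} [TopologicalSpace A]
    [LocallyPathConnectedSpace A] {U : Set A} (hU : IsOpen U) (hUc : IsPathConnected U) {F : A → ℂ}
    (hF : ContinuousOn F U)
    (h : ∀ K ⊆ U, IsCompact K → ∃ f : A → ℂ, ContinuousOn f K ∧ ∀ z ∈ K, Complex.exp (f z) = F z) :
    ∃ f : A → ℂ, ContinuousOn f U ∧ ∀ z ∈ U, Complex.exp (f z) = F z := by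
  classical
  have := hU.locallyPathConnectedSpace
  have := isPathConnected_iff_pathConnectedSpace.1 hUc
  have hF0 : ∀ z : U, F z ≠ 0 := fun z => by
    obtain ⟨f, -, hf⟩ := h {z.1} (singleton_subset_iff.2 z.2) isCompact_singleton
    exact hf z rfl ▸ Complex.exp_ne_zero _
  let F' : C(U, {w : ℂ // w ≠ 0}) :=
    ⟨fun z => ⟨F z, hF0 z⟩, (continuousOn_iff_continuous_domRestrict.1 hF).subtype_mk _⟩
  let a : U := Classical.arbitrary U
  have hFa : (⟨Complex.exp (Complex.log (F a)), Complex.exp_ne_zero _⟩ : {w : ℂ // w ≠ 0}) = F' a :=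
    Subtype.ext (Complex.exp_log (hF0 a))
  have hcov := Complex.isCoveringMap_exp
  obtain ⟨f, ⟨-, hf⟩, -⟩ := hcov.isLocalHomeomorph.existsUnique_continuousMap_lifts F' a
    (Complex.log (F a)) hFa
    (fun γ hγ => (hcov.exists_path_lifts (F'.comp γ) (Complex.log (F a))
      (by rw [ContinuousMap.comp_apply, hγ, hFa])).imp fun _ => And.symm) (by
    intro γ γ' Γ Γ' hγ hγ' hΓ hΓ' hlift hlift' hend
    obtain ⟨ℓ, hℓ, hℓF⟩ := h (range (fun t => (γ t).1) ∪ range fun t => (γ' t).1)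
      (union_subset (range_subset_iff.2 fun t => (γ t).2) (range_subset_iff.2 fun t => (γ' t).2))
      ((isCompact_range (by fun_prop)).union (isCompact_range (by fun_prop)))
    have h₁ := map_one_sub_map_zero_of_exp_eq_exp hℓ (γ := fun t => (γ t).1) (by fun_prop)
      (fun t => Or.inl ⟨t, rfl⟩) Γ.continuous fun t =>
        (congrArg Subtype.val (congrFun hlift t)).trans (hℓF _ (Or.inl ⟨t, rfl⟩)).symm
    have h₂ := map_one_sub_map_zero_of_exp_eq_exp hℓ (γ := fun t => (γ' t).1) (by fun_prop)
      (fun t => Or.inr ⟨t, rfl⟩) Γ'.continuous fun t =>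
        (congrArg Subtype.val (congrFun hlift' t)).trans (hℓF _ (Or.inr ⟨t, rfl⟩)).symm
    simp only [hend, hΓ, hγ] at h₁
    simp only [hΓ', hγ'] at h₂
    exact sub_left_injective (h₁.trans h₂.symm))
  have hfF : ∀ z : U, Complex.exp (f z) = F z := fun z => congrArg Subtype.val (congrFun hf z)
  refine ⟨fun z => if hz : z ∈ U then f ⟨z, hz⟩ else 0, ?_, fun z hz => ?_⟩
  · exact continuousOn_iff_continuous_domRestrict.2
      (f.continuous.congr fun z => by simp [domRestrict, z.2])
  · simp only [dif_pos hz, hfF]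

theorem tendsto_sub_div_sub_cobounded (c q : ℂ) :
    Tendsto (fun z : ℂ => (z - c) / (z - q)) (Bornology.cobounded ℂ) (𝓝 1) := by
  have hinv : Tendsto (fun z : ℂ => (z - q)⁻¹) (Bornology.cobounded ℂ) (𝓝 0) :=
    tendsto_inv₀_cobounded.comp (tendsto_sub_const_cobounded q)
  have hlim : Tendsto (fun z : ℂ => 1 + (q - c) * (z - q)⁻¹) (Bornology.cobounded ℂ) (𝓝 1) := by
    simpa using (hinv.const_mul (q - c)).const_add 1
  refine hlim.congr' ?_
  filter_upwards [Bornology.eventually_ne_cobounded q] with z hz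
  have hz' : z - q ≠ 0 := sub_ne_zero.2 hz
  field_simp
  ring

theorem tendsto_log_sub_div_sub_cobounded (c q : ℂ) :
    Tendsto (fun z : ℂ => Complex.log ((z - c) / (z - q))) (Bornology.cobounded ℂ) (𝓝 0) := by
  simpa using (tendsto_sub_div_sub_cobounded c q).clog (by simp)

theorem sub_div_sub_mem_slitPlane {z c q : ℂ} (h : ‖q - c‖ < ‖z - q‖) :
    (z - c) / (z - q) ∈ Complex.slitPlane := by
  have hpos : 0 < ‖z - q‖ := (norm_nonneg _).trans_lt h
  have heq : (z - c) / (z - q) = 1 + (q - c) / (z - q) := by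
    field_simp [norm_pos_iff.1 hpos]
    ring
  rw [heq]
  exact Complex.mem_slitPlane_of_norm_lt_one (by rwa [norm_div, div_lt_one hpos])

/-- `F` has a continuous logarithm on `K` that tends to `0` at infinity. When `∞` is added to a
closed set `K`, this says that `F`, extended by `1` at `∞`, is null-homotopic in `ℂ \ {0}`. -/
def HasVanishingLog (K : Set ℂ) (F : ℂ → ℂ) : Prop :=
  ∃ f : ℂ → ℂ, ContinuousOn f K ∧ (∀ z ∈ K, Complex.exp (f z) = F z) ∧
    Tendsto f (Bornology.cobounded ℂ ⊓ 𝓟 K) (𝓝 0)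

variable {K S : Set ℂ} {F G : ℂ → ℂ}

theorem HasVanishingLog.congr (hF : HasVanishingLog K F) (h : EqOn F G K) :
    HasVanishingLog K G := by
  obtain ⟨f, hf, hfF, hlim⟩ := hF
  exact ⟨f, hf, fun z hz => (hfF z hz).trans (h hz), hlim⟩

theorem HasVanishingLog.mul (hF : HasVanishingLog K F) (hG : HasVanishingLog K G) :
    HasVanishingLog K (F * G) := by
  obtain ⟨f, hf, hfF, hflim⟩ := hF
  obtain ⟨g, hg, hgG, hglim⟩ := hG
  exact ⟨fun z => f z + g z, hf.add hg, fun z hz => by simp [Complex.exp_add, hfF z hz, hgG z hz],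
    by simpa using hflim.add hglim⟩

theorem HasVanishingLog.inv (hF : HasVanishingLog K F) : HasVanishingLog K F⁻¹ := by
  obtain ⟨f, hf, hfF, hflim⟩ := hF
  exact ⟨fun z => -f z, hf.neg, fun z hz => by simp [Complex.exp_neg, hfF z hz],
    by simpa using hflim.neg⟩

theorem eventually_hasVanishingLog_sub_div_sub (hK : IsClosed K) {c : ℂ} (hc : c ∉ K) :
    ∀ᶠ q in 𝓝 c, HasVanishingLog K fun z => (z - c) / (z - q) := by
  obtain ⟨ε, hε, hball⟩ := Metric.isOpen_iff.1 hK.isOpen_compl c hc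
  filter_upwards [Metric.ball_mem_nhds c (half_pos hε)] with q hq
  have hslit : ∀ z ∈ K, (z - c) / (z - q) ∈ Complex.slitPlane := fun z hz => by
    have hzc : ε ≤ dist z c := not_lt.1 fun h => hball h hz
    apply sub_div_sub_mem_slitPlane
    rw [← dist_eq_norm, ← dist_eq_norm]
    linarith [dist_triangle z q c, mem_ball.1 hq]
  have hne : ∀ z ∈ K, z - q ≠ 0 := fun z hz h =>
    Complex.zero_notMem_slitPlane (by simpa [h] using hslit z hz)
  exact ⟨fun z => Complex.log ((z - c) / (z - q)),
    (ContinuousOn.div (by fun_prop) (by fun_prop) hne).clog hslit,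
    fun z hz => Complex.exp_log (Complex.slitPlane_ne_zero (hslit z hz)),
    (tendsto_log_sub_div_sub_cobounded c q).mono_left inf_le_left⟩

theorem hasVanishingLog_of_isPreconnected (hK : IsClosed K) (hS : IsPreconnected S)
    (hSK : S ⊆ Kᶜ) {c q : ℂ} (hc : c ∈ S) (hq : q ∈ S) :
    HasVanishingLog K fun z => (z - c) / (z - q) := by
  refine hS.induction₂ (fun c q => HasVanishingLog K fun z => (z - c) / (z - q))
    (fun x hx => (eventually_hasVanishingLog_sub_div_sub hK (hSK hx)).filter_mono
      nhdsWithin_le_nhds) (fun x y z _ hy _ hxy hyz => (hxy.mul hyz).congr fun w hw => ?_)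
    (fun x y _ _ hxy => hxy.inv.congr fun w _ => inv_div _ _) hc hq
  have hwy : w - y ≠ 0 := sub_ne_zero.2 fun h => hSK hy (h ▸ hw)
  exact div_mul_div_cancel₀ hwy

theorem HasVanishingLog.exists_int_tendsto (hF : HasVanishingLog S F) (hS : IsPreconnected S)
    {f : ℂ → ℂ} (hf : ContinuousOn f S) (hfF : ∀ z ∈ S, Complex.exp (f z) = F z) :
    ∃ m : ℤ, Tendsto f (Bornology.cobounded ℂ ⊓ 𝓟 S) (𝓝 (m * (2 * Real.pi * Complex.I))) := by
  obtain ⟨g, hg, hgF, hglim⟩ := hF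
  rcases S.eq_empty_or_nonempty with rfl | ⟨a, ha⟩
  · simp
  obtain ⟨m, hm⟩ := Complex.exp_eq_exp_iff_exists_int.1 ((hfF a ha).trans (hgF a ha).symm)
  refine ⟨m, ?_⟩
  rw [← zero_add (_ * _)]
  refine (hglim.add_const _).congr' ?_
  filter_upwards [mem_inf_of_right (mem_principal_self _)] with z hz
  have := sub_eq_sub_of_exp_eq_exp hS hf hg (fun z hz => (hfF z hz).trans (hgF z hz).symm) hz ha
  rw [hm] at this
  linear_combination -this

theorem exists_int_tendsto_of_isPreconnected_compl (hS : IsClosed S) (hSp : IsPreconnected S)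
    (hSc : IsPreconnected Sᶜ) {c q : ℂ} (hc : c ∉ S) (hq : q ∉ S) {f : ℂ → ℂ}
    (hf : ContinuousOn f S) (hfexp : ∀ z ∈ S, Complex.exp (f z) = (z - c) / (z - q)) :
    ∃ m : ℤ, Tendsto f (Bornology.cobounded ℂ ⊓ 𝓟 S) (𝓝 (m * (2 * Real.pi * Complex.I))) :=
  (hasVanishingLog_of_isPreconnected hS hSc Subset.rfl hc hq).exists_int_tendsto hSp hf hfexp

theorem HasVanishingLog.of_isBounded_diff (hF : HasVanishingLog S F) (hS : IsPreconnected S)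
    (hKS : Bornology.IsBounded (K \ S)) {f : ℂ → ℂ} (hf : ContinuousOn f (S ∪ K))
    (hfF : ∀ z ∈ S ∪ K, Complex.exp (f z) = F z) : HasVanishingLog K F := by
  obtain ⟨m, hm⟩ := hF.exists_int_tendsto hS (hf.mono subset_union_left) fun z hz =>
    hfF z (Or.inl hz)
  refine ⟨fun z => f z - m * (2 * Real.pi * Complex.I),
    (hf.mono subset_union_right).sub continuousOn_const, fun z hz => ?_, ?_⟩
  · rw [Complex.exp_sub, Complex.exp_int_mul_two_pi_mul_I, div_one, hfF z (Or.inr hz)]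
  · rw [← sub_self ((m : ℂ) * _)]
    refine (hm.sub_const _).mono_left (le_inf inf_le_left (le_principal_iff.2 ?_))
    filter_upwards [mem_inf_of_left (Bornology.isBounded_def.1 hKS),
      mem_inf_of_right (mem_principal_self K)] with z hz hzK
    exact not_not.1 fun hzS => hz ⟨hzK, hzS⟩

end ContinuousLog

section Borsuk

theorem exists_eq_zero_of_eventuallyEq_sub {F : ℂ → ℂ} (hF : Continuous F) {p : ℂ}
    (hp : F =ᶠ[Bornology.cobounded ℂ] fun w => w - p) : ∃ w, F w = 0 := by
  by_contra! h0
  obtain ⟨G, ⟨-, hG⟩, -⟩ := Complex.isCoveringMapOn_exp.existsUnique_continuousMap_lifts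
    (⟨F, hF⟩ : C(ℂ, ℂ)) (a₀ := 0) (e₀ := Complex.log (F 0)) (Complex.exp_log (h0 0)) h0
  obtain ⟨r, -, hr⟩ := hasBasis_cobounded_norm.eventually_iff.1 hp
  set ρ : ℝ := |r| + ‖p‖ + 1
  have hρ : 0 < ρ := by positivity
  let γ : ℝ → ℂ := fun t => p + ρ * Complex.exp (t * Complex.I)
  have hγr : ∀ t, r ≤ ‖γ t‖ := fun t => by
    have hρt : ‖γ t - p‖ = ρ := by simp [γ, Complex.norm_exp_ofReal_mul_I, abs_of_pos hρ]
    linarith [norm_sub_le (γ t) p, le_abs_self r]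
  have hlog : ∀ t : ℝ, Complex.exp (G (γ t)) = Complex.exp (Complex.log ρ + t * Complex.I) :=
    fun t => calc
      Complex.exp (G (γ t)) = F (γ t) := congrFun hG (γ t)
      _ = γ t - p := hr (hγr t)
      _ = Complex.exp (Complex.log ρ + t * Complex.I) := by
        simp [γ, Complex.exp_add, Complex.exp_log (Complex.ofReal_ne_zero.2 hρ.ne')]
  have hconst := sub_eq_sub_of_exp_eq_exp isPreconnected_univ (f := fun t => G (γ t))
    (g := fun t : ℝ => Complex.log ρ + t * Complex.I) (by fun_prop) (by fun_prop)
    (fun t _ => hlog t) (mem_univ 0) (mem_univ (2 * Real.pi))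
  have hloop : γ (2 * Real.pi) = γ 0 := by simp [γ, Complex.exp_two_pi_mul_I]
  simp [hloop, Real.pi_ne_zero] at hconst

theorem exists_mem_eq_zero_of_eqOn_frontier {V : Set ℂ} (hV : Bornology.IsBounded V) {p : ℂ}
    (hp : p ∈ V) {F : ℂ → ℂ} (hF : ContinuousOn F (closure V))
    (hFV : ∀ w ∈ frontier V, F w = w - p) : ∃ w ∈ V, F w = 0 := by
  classical
  obtain ⟨w, hw⟩ := exists_eq_zero_of_eventuallyEq_sub (p := p)
    (continuous_piecewise hFV hF (by fun_prop)) (by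
      filter_upwards [Bornology.isBounded_def.1 hV] with w hw using piecewise_eq_of_notMem _ _ _ hw)
  by_cases hwV : w ∈ V
  · exact ⟨w, hwV, by rwa [piecewise_eq_of_mem _ _ _ hwV] at hw⟩
  · rw [piecewise_eq_of_notMem _ _ _ hwV, sub_eq_zero] at hw
    exact absurd (hw ▸ hp) hwV

theorem exists_mem_frontier_exp_mul_ne_sub {V : Set ℂ} (hV : Bornology.IsBounded V) {p : ℂ}
    (hp : p ∈ V) {f h : ℂ → ℂ} (hf : ContinuousOn f (frontier V)) (hh : ContinuousOn h (closure V))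
    (hh0 : ∀ w ∈ V, h w ≠ 0) : ∃ w ∈ frontier V, Complex.exp (f w) * h w ≠ w - p := by
  by_contra! hfh
  obtain ⟨G, hG⟩ := ContinuousMap.exists_restrict_eq isClosed_frontier
    ⟨(frontier V).domRestrict f, continuousOn_iff_continuous_domRestrict.1 hf⟩
  have hGf : ∀ w ∈ frontier V, G w = f w := fun w hw => DFunLike.congr_fun hG ⟨w, hw⟩
  obtain ⟨w, hw, hw0⟩ := exists_mem_eq_zero_of_eqOn_frontier hV hp
    (F := fun w => Complex.exp (G w) * h w) (by fun_prop) fun w hw => by rw [hGf w hw, hfh w hw]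
  exact mul_ne_zero (Complex.exp_ne_zero _) (hh0 w hw) hw0

theorem continuousOn_update_comp_add_inv {K : Set ℂ} {f : ℂ → ℂ} (hf : ContinuousOn f K) {l : ℂ}
    (hlim : Tendsto f (Bornology.cobounded ℂ ⊓ 𝓟 K) (𝓝 l)) (q : ℂ) :
    ContinuousOn (Function.update (fun w => f (q + w⁻¹)) 0 l)
      (insert 0 ((fun w => q + w⁻¹) ⁻¹' K)) := by
  have hmaps : MapsTo (fun w => q + w⁻¹) (insert 0 ((fun w => q + w⁻¹) ⁻¹' K) \ {0}) K :=
    fun w hw => hw.1.resolve_left hw.2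
  refine continuousOn_update_iff.2 ⟨hf.comp ?_ hmaps, fun _ => hlim.comp (tendsto_inf.2 ⟨?_, ?_⟩)⟩
  · exact continuousOn_const.add (continuousOn_inv₀.mono fun w hw => hw.2)
  · exact ((tendsto_const_add_cobounded q).comp tendsto_inv₀_nhdsNE_zero).mono_left
      (nhdsWithin_mono _ fun w hw => hw.2)
  · exact tendsto_principal.2 (eventually_mem_nhdsWithin.mono hmaps)

theorem add_inv_mem_closure {U : Set ℂ} {q w : ℂ} (hw0 : w ≠ 0)
    (hw : w ∈ closure ((fun w => q + w⁻¹) ⁻¹' U)) : q + w⁻¹ ∈ closure U :=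
  closure_mono (image_preimage_subset _ _)
    ((continuousAt_const.add (continuousAt_inv₀ hw0)).continuousWithinAt.mem_closure_image hw)

theorem add_inv_mem_frontier {U : Set ℂ} {q w : ℂ} (hw0 : w ≠ 0)
    (hw : w ∈ frontier ((fun w => q + w⁻¹) ⁻¹' U)) : q + w⁻¹ ∈ frontier U := by
  rw [frontier_eq_closure_inter_closure] at hw ⊢
  exact ⟨add_inv_mem_closure hw0 hw.1, add_inv_mem_closure hw0 hw.2⟩

theorem isBounded_preimage_add_inv {U : Set ℂ} {q : ℂ} (hq : q ∉ closure U) :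
    Bornology.IsBounded ((fun w => q + w⁻¹) ⁻¹' U) := by
  have hlim : Tendsto (fun w : ℂ => q + w⁻¹) (Bornology.cobounded ℂ) (𝓝 q) := by
    simpa using tendsto_inv₀_cobounded.const_add q
  exact Bornology.isBounded_def.2
    (hlim (mem_of_superset (isClosed_closure.isOpen_compl.mem_nhds hq)
      (compl_subset_compl.2 subset_closure)))

theorem add_inv_sub_div_add_inv_sub {q w : ℂ} (hw0 : w ≠ 0) (c : ℂ) :
    (q + w⁻¹ - c) / (q + w⁻¹ - q) = 1 - (c - q) * w := by
  field_simp
  ring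

theorem HasVanishingLog.mem_connectedComponentIn_or {K : Set ℂ} (hK : IsClosed K) {c q q' : ℂ}
    (hc : c ∉ K) (hq : q ∉ K) (hq' : q' ∉ K) {k : ℤ}
    (h : HasVanishingLog K fun z => (z - c) / (z - q) * ((z - q') / (z - q)) ^ k) :
    c ∈ connectedComponentIn Kᶜ q ∨ c ∈ connectedComponentIn Kᶜ q' := by
  obtain ⟨f, hf, hfexp, hlim⟩ := h
  by_contra! hcon
  set U := connectedComponentIn Kᶜ c
  have hfrU : frontier U ⊆ K := by
    simpa using frontier_connectedComponentIn_subset hK.isOpen_compl c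
  have hnotMem : ∀ {x}, x ∉ K → c ∉ connectedComponentIn Kᶜ x → x ∉ closure U := by
    intro x hx hcx hxU
    have hxU' := mem_connectedComponentIn_of_mem_closure hxU hx
    exact hcx (connectedComponentIn_eq hxU' ▸ mem_connectedComponentIn hc)
  have hqU := hnotMem hq hcon.1
  have hcq : c - q ≠ 0 := sub_ne_zero.2 fun h =>
    hqU (h ▸ subset_closure (mem_connectedComponentIn hc))
  -- The inversion at `q` makes the component `U` bounded, so that Borsuk's argument applies to it.
  set V := (fun w => q + w⁻¹) ⁻¹' U
  have hh : ∀ w ∈ closure V, 1 - (q' - q) * w ≠ 0 := fun w hw h0 => by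
    have hw0 : w ≠ 0 := by rintro rfl; simp at h0
    have hqw : q + w⁻¹ = q' := by linear_combination w⁻¹ * h0 + (q' - q) * mul_inv_cancel₀ hw0
    exact hnotMem hq' hcon.2 (hqw ▸ add_inv_mem_closure hw0 hw)
  have hfr : frontier V ⊆ insert 0 ((fun w => q + w⁻¹) ⁻¹' K) := fun w hw =>
    (eq_or_ne w 0).imp_right fun hw0 => hfrU (add_inv_mem_frontier hw0 hw)
  obtain ⟨w, hw, hne⟩ := exists_mem_frontier_exp_mul_ne_sub (p := (c - q)⁻¹)
    (h := fun w => -(c - q)⁻¹ * (1 - (q' - q) * w) ^ (-k)) (isBounded_preimage_add_inv hqU)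
    (by simpa [V] using mem_connectedComponentIn hc)
    ((continuousOn_update_comp_add_inv hf hlim q).mono hfr)
    (continuousOn_const.mul (ContinuousOn.zpow₀ (by fun_prop) _ fun w hw => Or.inl (hh w hw)))
    fun w hw => mul_ne_zero (by simpa) (zpow_ne_zero _ (hh w (subset_closure hw)))
  refine hne ?_
  rcases eq_or_ne w 0 with rfl | hw0
  · simp
  · have hfw : Complex.exp (f (q + w⁻¹)) = (1 - (c - q) * w) * (1 - (q' - q) * w) ^ k := by
      simpa only [add_inv_sub_div_add_inv_sub hw0] using hfexp _ ((hfr hw).resolve_left hw0)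
    rw [Function.update_of_ne hw0, hfw, zpow_neg]
    have hk := mul_inv_cancel₀ (zpow_ne_zero k (hh w (frontier_subset_closure hw)))
    linear_combination -(c - q)⁻¹ * (1 - (c - q) * w) * hk + w * mul_inv_cancel₀ hcq

theorem hasVanishingLog_sub_div_sub_iff {K : Set ℂ} (hK : IsClosed K) {c q : ℂ} (hc : c ∉ K)
    (hq : q ∉ K) :
    HasVanishingLog K (fun z => (z - c) / (z - q)) ↔ c ∈ connectedComponentIn Kᶜ q := by
  refine ⟨fun h => ?_, fun h => hasVanishingLog_of_isPreconnected hK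
    isPreconnected_connectedComponentIn (connectedComponentIn_subset _ _) h
    (mem_connectedComponentIn hq)⟩
  simpa using HasVanishingLog.mem_connectedComponentIn_or (k := 0) hK hc hq hq (by simpa using h)

end Borsuk

section LogSub

theorem exists_continuousOn_log_sub_of_isCompact {C K : Set ℂ} (hC : IsPreconnected C)
    (hCb : ¬ Bornology.IsBounded C) (hK : IsCompact K) (hKC : K ⊆ Cᶜ) {c : ℂ} (hc : c ∈ C) :
    ∃ f : ℂ → ℂ, ContinuousOn f K ∧ ∀ z ∈ K, Complex.exp (f z) = z - c := by
  obtain ⟨r, hr0, hr⟩ := hK.isBounded.exists_pos_norm_lt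
  obtain ⟨c', hc', hrc⟩ : ∃ c' ∈ C, r < ‖c'‖ := by
    by_contra! h
    exact hCb (isBounded_iff_forall_norm_le.2 ⟨r, h⟩)
  obtain ⟨f, hf, hfe, -⟩ :=
    hasVanishingLog_of_isPreconnected hK.isClosed hC (subset_compl_comm.1 hKC) hc hc'
  have hc0 : c' ≠ 0 := norm_pos_iff.1 (hr0.trans hrc)
  have hslit : ∀ z ∈ K, (c' - z) / (c' - 0) ∈ Complex.slitPlane := fun z hz =>
    sub_div_sub_mem_slitPlane (by simpa using (hr z hz).trans hrc)
  refine ⟨fun z => f z + (Complex.log ((c' - z) / (c' - 0)) + Complex.log (-c')), ?_, ?_⟩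
  · exact hf.add ((ContinuousOn.clog (by fun_prop) hslit).add continuousOn_const)
  · intro z hz
    have hz' : z - c' ≠ 0 := sub_ne_zero.2 fun h => hKC hz (h ▸ hc')
    rw [Complex.exp_add, Complex.exp_add, hfe z hz,
      Complex.exp_log (Complex.slitPlane_ne_zero (hslit z hz)), Complex.exp_log (neg_ne_zero.2 hc0)]
    field_simp
    ring

theorem exists_continuousOn_log_sub {C : Set ℂ} (hC : IsClosed C) (hCp : IsPreconnected C)
    (hCb : ¬ Bornology.IsBounded C) (hCc : IsConnected Cᶜ) {c : ℂ} (hc : c ∈ C) :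
    ∃ f : ℂ → ℂ, ContinuousOn f Cᶜ ∧ ∀ z ∈ Cᶜ, Complex.exp (f z) = z - c :=
  exists_continuousOn_log_of_forall_isCompact hC.isOpen_compl
    (hC.isOpen_compl.isConnected_iff_isPathConnected.1 hCc) (by fun_prop)
    fun _ hKC hK => exists_continuousOn_log_sub_of_isCompact hCp hCb hK hKC hc

end LogSub

section LogBranches

/-- The point `1 + 2πi` of the definition of "lies above". -/
noncomputable def upperPoint : ℂ := (1 : ℂ) + 2 * (Real.pi : ℂ) * Complex.I

/-- The mirror image `1 - 2πi` of `upperPoint`, on the other side of the ray `[0,∞)`. -/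
noncomputable def lowerPoint : ℂ := (1 : ℂ) - 2 * (Real.pi : ℂ) * Complex.I

@[simp] theorem upperPoint_re : upperPoint.re = 1 := by simp [upperPoint]

@[simp] theorem upperPoint_im : upperPoint.im = 2 * Real.pi := by simp [upperPoint]

@[simp] theorem lowerPoint_re : lowerPoint.re = 1 := by simp [lowerPoint]

@[simp] theorem lowerPoint_im : lowerPoint.im = -(2 * Real.pi) := by simp [lowerPoint]

/-- The closed left half-plane together with the real axis. It contains the sets `D ∪ R` of the
definition of "lies above", and it is small enough to carry branches of the logarithms needed. -/
def rayDomain : Set ℂ := {z | z.re ≤ 0 ∨ z.im = 0}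

theorem upperPoint_notMem_rayDomain : upperPoint ∉ rayDomain := by
  simp [rayDomain, Real.pi_ne_zero]

theorem lowerPoint_notMem_rayDomain : lowerPoint ∉ rayDomain := by
  simp [rayDomain, Real.pi_ne_zero]

theorem exists_continuousOn_log_sub_upperPoint :
    ∃ f : ℂ → ℂ, ContinuousOn f rayDomain ∧
      ∀ z ∈ rayDomain, Complex.exp (f z) = z - upperPoint := by
  have hslit : ∀ z ∈ rayDomain, Complex.I * (z - upperPoint) ∈ Complex.slitPlane := by
    intro z hz
    have hpos : z.im = 0 → z.im < 2 * Real.pi := fun h => h ▸ Real.two_pi_pos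
    have hne : z.re ≤ 0 → z.re - 1 ≠ 0 := fun h => by linarith
    simpa [Complex.mem_slitPlane_iff] using hz.symm.imp hpos hne
  refine ⟨fun z => Complex.log (Complex.I * (z - upperPoint)) - Complex.log Complex.I,
    (ContinuousOn.clog (by fun_prop) hslit).sub continuousOn_const, fun z hz => ?_⟩
  rw [Complex.exp_sub, Complex.exp_log (Complex.slitPlane_ne_zero (hslit z hz)),
    Complex.exp_log Complex.I_ne_zero, mul_div_cancel_left₀ _ Complex.I_ne_zero]

theorem im_sub_lowerPoint_div_sub_upperPoint (z : ℂ) :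
    ((z - lowerPoint) / (z - upperPoint)).im
      = 4 * Real.pi * (z.re - 1) / Complex.normSq (z - upperPoint) := by
  rw [Complex.div_im]
  simp only [Complex.sub_re, Complex.sub_im, upperPoint_re, upperPoint_im, lowerPoint_re,
    lowerPoint_im]
  ring

theorem normSq_sub_upperPoint_pos {z : ℂ} (hz : z.re ≠ 1) :
    0 < Complex.normSq (z - upperPoint) :=
  Complex.normSq_pos.2 fun h => hz (by simp [sub_eq_zero.1 h])

theorem neg_sub_lowerPoint_div_sub_upperPoint_mem_slitPlane {z : ℂ} (hz : z ∈ rayDomain) :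
    -((z - lowerPoint) / (z - upperPoint)) ∈ Complex.slitPlane := by
  by_cases hre : z.re = 1
  · have hz1 : z = 1 := Complex.ext hre (hz.resolve_left (by linarith))
    simp [hz1, lowerPoint, upperPoint, Real.pi_ne_zero]
  · refine Complex.mem_slitPlane_iff.2 (Or.inr ?_)
    rw [Complex.neg_im, im_sub_lowerPoint_div_sub_upperPoint, neg_ne_zero]
    exact div_ne_zero (mul_ne_zero (by positivity) (sub_ne_zero.2 hre))
      (normSq_sub_upperPoint_pos hre).ne'

theorem log_neg_add_pi_mul_I_of_im_pos {z : ℂ} (h : 0 < z.im) :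
    Complex.log (-z) + Real.pi * Complex.I = Complex.log z := by
  rw [Complex.log, Complex.log, Complex.arg_neg_eq_arg_sub_pi_of_im_pos h, norm_neg]
  push_cast
  ring

theorem log_neg_add_pi_mul_I_of_im_neg {z : ℂ} (h : z.im < 0) :
    Complex.log (-z) + Real.pi * Complex.I = Complex.log z + 2 * Real.pi * Complex.I := by
  rw [Complex.log, Complex.log, Complex.arg_neg_eq_arg_add_pi_of_im_neg h, norm_neg]
  push_cast
  ring

/-- A branch of `log ((z - (1 - 2πi)) / (z - (1 + 2πi)))` on `rayDomain`. It distinguishes the two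
ends of `rayDomain`: it tends to `2πi` at infinity on the left and to `0` on the right. -/
noncomputable def logQuotient (z : ℂ) : ℂ :=
  Complex.log (-((z - lowerPoint) / (z - upperPoint))) + Real.pi * Complex.I

theorem continuousOn_logQuotient : ContinuousOn logQuotient rayDomain := by
  have hne : ∀ z ∈ rayDomain, z - upperPoint ≠ 0 := fun z hz h =>
    upperPoint_notMem_rayDomain (sub_eq_zero.1 h ▸ hz)
  exact (ContinuousOn.clog (ContinuousOn.div (by fun_prop) (by fun_prop) hne).neg fun z hz =>
    neg_sub_lowerPoint_div_sub_upperPoint_mem_slitPlane hz).add continuousOn_const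

theorem exp_logQuotient {z : ℂ} (hz : z ∈ rayDomain) :
    Complex.exp (logQuotient z) = (z - lowerPoint) / (z - upperPoint) := by
  rw [logQuotient, Complex.exp_add, Complex.exp_log (Complex.slitPlane_ne_zero
    (neg_sub_lowerPoint_div_sub_upperPoint_mem_slitPlane hz)), Complex.exp_pi_mul_I]
  ring

theorem tendsto_logQuotient_re_lt_one :
    Tendsto logQuotient (Bornology.cobounded ℂ ⊓ 𝓟 {z | z.re < 1})
      (𝓝 (2 * Real.pi * Complex.I)) := by
  rw [← zero_add (_ * _)]
  refine (((tendsto_log_sub_div_sub_cobounded lowerPoint upperPoint).mono_left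
    inf_le_left).add_const _).congr' ?_
  filter_upwards [mem_inf_of_right (mem_principal_self _)] with z hz
  refine (log_neg_add_pi_mul_I_of_im_neg ?_).symm
  rw [im_sub_lowerPoint_div_sub_upperPoint]
  exact div_neg_of_neg_of_pos (mul_neg_of_pos_of_neg (by positivity) (sub_neg.2 hz))
    (normSq_sub_upperPoint_pos hz.ne)

theorem tendsto_logQuotient_one_lt_re :
    Tendsto logQuotient (Bornology.cobounded ℂ ⊓ 𝓟 {z | 1 < z.re}) (𝓝 0) := by
  refine ((tendsto_log_sub_div_sub_cobounded lowerPoint upperPoint).mono_left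
    inf_le_left).congr' ?_
  filter_upwards [mem_inf_of_right (mem_principal_self _)] with z hz
  refine (log_neg_add_pi_mul_I_of_im_pos ?_).symm
  rw [im_sub_lowerPoint_div_sub_upperPoint]
  exact div_pos (mul_pos (by positivity) (sub_pos.2 hz)) (normSq_sub_upperPoint_pos (ne_of_gt hz))

/-- The ray `[0,∞)` in the complex plane. -/
def nonnegRay : Set ℂ := Complex.ofReal '' Ici 0

theorem mem_nonnegRay {z : ℂ} : z ∈ nonnegRay ↔ 0 ≤ z.re ∧ z.im = 0 := by
  constructor
  · rintro ⟨x, hx, rfl⟩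
    exact ⟨hx, Complex.ofReal_im x⟩
  · rintro ⟨hre, him⟩
    exact ⟨z.re, hre, Complex.ext rfl him.symm⟩

theorem isClosed_nonnegRay : IsClosed nonnegRay :=
  Complex.isometry_ofReal.isClosedEmbedding.isClosedMap _ isClosed_Ici

theorem isPreconnected_nonnegRay : IsPreconnected nonnegRay :=
  isPreconnected_Ici.image _ Complex.continuous_ofReal.continuousOn

theorem isPreconnected_compl_nonnegRay : IsPreconnected nonnegRayᶜ := by
  have hneg : nonnegRayᶜ = Neg.neg '' Complex.slitPlane := by
    ext z
    simp [mem_nonnegRay, Complex.mem_slitPlane_iff, imp_iff_not_or]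
  rw [hneg]
  exact (Complex.starConvex_one_slitPlane.isPathConnected
    Complex.one_mem_slitPlane).isConnected.isPreconnected.image _ continuous_neg.continuousOn

theorem cobounded_inf_nonnegRay_le :
    Bornology.cobounded ℂ ⊓ 𝓟 nonnegRay ≤ Bornology.cobounded ℂ ⊓ 𝓟 {z | 1 < z.re} := by
  refine le_inf inf_le_left (le_principal_iff.2 ?_)
  filter_upwards [mem_inf_of_left (tendsto_norm_cobounded_atTop.eventually (eventually_gt_atTop 1)),
    mem_inf_of_right (mem_principal_self nonnegRay)] with z hz ⟨x, hx, hxz⟩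
  subst hxz
  simpa [abs_of_nonneg (mem_Ici.1 hx)] using hz

end LogBranches

section LeftTract

/-- A closed unbounded connected subset of the open left half-plane that does not separate the
plane. These are the properties of the components of `X̂` on which the order relation depends. -/
structure IsLeftTract (C : Set ℂ) : Prop where
  isClosed : IsClosed C
  isPreconnected : IsPreconnected C
  not_isBounded : ¬ Bornology.IsBounded C
  isConnected_compl : IsConnected Cᶜ
  re_neg : ∀ z ∈ C, z.re < 0

theorem IsLeftTract.nonempty {C : Set ℂ} (hC : IsLeftTract C) : C.Nonempty :=
  nonempty_iff_ne_empty.2 fun h => hC.not_isBounded (h ▸ Bornology.isBounded_empty)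

theorem hatSet_eq_preimage {X : Set ℂ} : hatSet X = Complex.exp ⁻¹' X := by
  ext z
  simp [hatSet]

theorem re_neg_of_mem_hatSet {X : Set ℂ} (hXb : X ⊆ ball 0 1) {z : ℂ} (hz : z ∈ hatSet X) :
    z.re < 0 := by
  simpa [Complex.norm_exp] using hXb hz.1

theorem exists_path_lift_exp {X : Set ℂ} (h0 : (0 : ℂ) ∈ X) (hXns : IsPathConnected Xᶜ)
    {z w : ℂ} (hz : Complex.exp z ∉ X) (hw : w ∉ X) :
    ∃ Γ : C(unitInterval, ℂ), Γ 0 = z ∧ Complex.exp (Γ 1) = w ∧ ∀ t, Complex.exp (Γ t) ∉ X := by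
  obtain ⟨γ, hγ⟩ := hXns.joinedIn _ hz _ hw
  have hγ0 : ∀ t, γ t ≠ 0 := fun t h => hγ t (h ▸ h0)
  obtain ⟨Γ, hΓ, hΓ0⟩ := Complex.isCoveringMap_exp.exists_path_lifts
    (⟨fun t => ⟨γ t, hγ0 t⟩, by fun_prop⟩ : C(unitInterval, {z : ℂ // z ≠ 0})) z
    (Subtype.ext γ.source)
  have hΓexp : ∀ t, Complex.exp (Γ t) = γ t := fun t => congrArg Subtype.val (congrFun hΓ t)
  exact ⟨Γ, hΓ0, (hΓexp 1).trans γ.target, fun t => hΓexp t ▸ hγ t⟩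

theorem isConnected_compl_hatSet {X : Set ℂ} (hX : IsClosed X) (h0 : (0 : ℂ) ∈ X)
    (hXns : IsConnected Xᶜ) (hXb : X ⊆ ball 0 1) : IsConnected (hatSet X)ᶜ := by
  have hright : {z : ℂ | 0 ≤ z.re} ⊆ (hatSet X)ᶜ := fun z hz hzX =>
    (re_neg_of_mem_hatSet hXb hzX).not_ge hz
  have h1 : (1 : ℂ) ∉ X := fun h => by simpa using hXb h
  refine ⟨⟨0, hright (by simp)⟩, isPreconnected_of_forall 0 fun z hz => ?_⟩
  obtain ⟨Γ, hΓ0, hΓ1, hΓX⟩ := exists_path_lift_exp h0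
    (hX.isOpen_compl.isConnected_iff_isPathConnected.1 hXns) (hatSet_eq_preimage ▸ hz) h1
  have hre : 0 ≤ (Γ 1).re := by
    have hnorm := congrArg norm hΓ1
    rw [Complex.norm_exp, norm_one, Real.exp_eq_one_iff] at hnorm
    exact hnorm.ge
  refine ⟨range Γ ∪ {z : ℂ | 0 ≤ z.re}, ?_, Or.inr (by simp), Or.inl ⟨0, hΓ0⟩, ?_⟩
  · rintro w (⟨t, rfl⟩ | hw)
    · exact fun h => hΓX t h.1
    · exact hright hw
  · exact (isPreconnected_range Γ.continuous).union (Γ 1) ⟨1, rfl⟩ hre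
      (convex_halfSpace_re_ge 0).isPreconnected

theorem isLeftTract_of_mem_componentsOf_hatSet {X C : Set ℂ} (hX : IsClosed X)
    (hXc : IsPreconnected X) (hXns : IsConnected Xᶜ) (h0 : (0 : ℂ) ∈ X) (hXb : X ⊆ ball 0 1)
    (hC : C ∈ componentsOf (hatSet X)) : IsLeftTract C := by
  obtain ⟨x, hx, rfl⟩ := hC
  have hclosed : IsClosed (hatSet X) := hatSet_eq_preimage ▸ hX.preimage Complex.continuous_exp
  have hCclosed := isClosed_connectedComponentIn hclosed x
  refine ⟨hCclosed, isPreconnected_connectedComponentIn, fun hb => ?_,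
    isConnected_compl_connectedComponentIn hclosed (isConnected_compl_hatSet hX h0 hXns hXb) x,
    fun z hz => re_neg_of_mem_hatSet hXb (connectedComponentIn_subset _ _ hz)⟩
  have hcpt := isCompact_of_isClosed_isBounded hCclosed hb
  rw [hatSet_eq_preimage] at hcpt
  obtain ⟨z, hz⟩ := subset_range_of_isCompact_connectedComponentIn_preimage Complex.continuous_exp
    Complex.isOpenMap_exp hX hXc hx.1 hcpt h0
  exact Complex.exp_ne_zero z hz

end LeftTract

section AboveRay

variable {C D : Set ℂ} {s : ℝ → ℂ}

theorem AbovePath.isClosed_union_aboveRay (hs : AbovePath C D s) (hD : IsClosed D) :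
    IsClosed (D ∪ AboveRay s) :=
  hD.union ((isCompact_Icc.image_of_continuousOn hs.1).isClosed.union isClosed_nonnegRay)

theorem AbovePath.isPreconnected_union_aboveRay (hs : AbovePath C D s) (hD : IsPreconnected D) :
    IsPreconnected (D ∪ AboveRay s) := by
  have hray : IsPreconnected (AboveRay s) :=
    (isPreconnected_Icc.image _ hs.1).union 0 ⟨1, by simp, hs.2.2.2⟩ ⟨0, by simp⟩
      isPreconnected_nonnegRay
  exact hD.union (s 0) hs.2.2.1 (Or.inl ⟨0, by simp, rfl⟩) hray

theorem AbovePath.union_aboveRay_subset_rayDomain (hs : AbovePath C D s) (hD : IsLeftTract D) :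
    D ∪ AboveRay s ⊆ rayDomain := by
  rintro z (hz | ⟨t, ht, rfl⟩ | hz)
  · exact Or.inl (hD.re_neg z hz).le
  · exact Or.inl (hs.2.1 t ht).1
  · exact Or.inr (mem_nonnegRay.1 hz).2

theorem AbovePath.disjoint_union_aboveRay (hs : AbovePath C D s) (hC : IsLeftTract C)
    (hCD : Disjoint C D) : Disjoint C (D ∪ AboveRay s) := by
  rw [disjoint_left]
  rintro z hz (hzD | ⟨t, ht, rfl⟩ | hzR)
  · exact disjoint_left.1 hCD hz hzD
  · exact (hs.2.1 t ht).2 hz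
  · exact (hC.re_neg z hz).not_ge (mem_nonnegRay.1 hzR).1

theorem AbovePath.upperPoint_notMem (hs : AbovePath C D s) (hD : IsLeftTract D) :
    upperPoint ∉ D ∪ AboveRay s :=
  fun h => upperPoint_notMem_rayDomain (hs.union_aboveRay_subset_rayDomain hD h)

theorem AbovePath.lowerPoint_notMem (hs : AbovePath C D s) (hD : IsLeftTract D) :
    lowerPoint ∉ D ∪ AboveRay s :=
  fun h => lowerPoint_notMem_rayDomain (hs.union_aboveRay_subset_rayDomain hD h)

/-- The open first quadrant. It contains `upperPoint` and misses all the sets `D ∪ R`. -/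
def firstQuadrant : Set ℂ := {z | 0 < z.re} ∩ {z | 0 < z.im}

theorem mem_firstQuadrant {z : ℂ} : z ∈ firstQuadrant ↔ 0 < z.re ∧ 0 < z.im := Iff.rfl

theorem isPreconnected_firstQuadrant : IsPreconnected firstQuadrant :=
  ((convex_halfSpace_re_gt 0).inter (convex_halfSpace_im_gt 0)).isPreconnected

theorem upperPoint_mem_firstQuadrant : upperPoint ∈ firstQuadrant := by
  simp [firstQuadrant, Real.pi_pos]

theorem not_isBounded_firstQuadrant : ¬ Bornology.IsBounded firstQuadrant := by
  intro hb
  obtain ⟨r, hr⟩ := isBounded_iff_forall_norm_le.1 hb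
  have hmem : (⟨|r| + 1, 1⟩ : ℂ) ∈ firstQuadrant :=
    mem_firstQuadrant.2 ⟨by positivity, one_pos⟩
  have hle := (Complex.re_le_norm _).trans (hr _ hmem)
  linarith [le_abs_self r]

theorem AbovePath.firstQuadrant_subset_compl (hs : AbovePath C D s) (hD : IsLeftTract D) :
    firstQuadrant ⊆ (D ∪ AboveRay s)ᶜ := fun _ hz h =>
  (hs.union_aboveRay_subset_rayDomain hD h).elim (not_le.2 hz.1) hz.2.ne'

theorem AbovePath.firstQuadrant_subset_connectedComponentIn (hs : AbovePath C D s)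
    (hD : IsLeftTract D) :
    firstQuadrant ⊆ connectedComponentIn (D ∪ AboveRay s)ᶜ upperPoint :=
  isPreconnected_firstQuadrant.subset_connectedComponentIn upperPoint_mem_firstQuadrant
    (hs.firstQuadrant_subset_compl hD)

theorem AbovePath.aboveVia_iff (hs : AbovePath C D s) (hC : IsLeftTract C) (hD : IsLeftTract D)
    (hCD : Disjoint C D) {c : ℂ} (hc : c ∈ C) :
    AboveVia C D s ↔ c ∈ connectedComponentIn (D ∪ AboveRay s)ᶜ upperPoint := by
  refine ⟨fun h => h.2 hc, fun h => ⟨fun hb => ?_, ?_⟩⟩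
  · exact not_isBounded_firstQuadrant (hb.subset (hs.firstQuadrant_subset_connectedComponentIn hD))
  · change C ⊆ connectedComponentIn _ upperPoint
    rw [connectedComponentIn_eq h]
    exact hC.isPreconnected.subset_connectedComponentIn hc
      (disjoint_left.1 (hs.disjoint_union_aboveRay hC hCD))

theorem IsLeftTract.exists_continuousOn_log_sub_div_sub_upperPoint (hC : IsLeftTract C) {c : ℂ}
    (hc : c ∈ C) : ∃ f : ℂ → ℂ, ContinuousOn f (Cᶜ ∩ rayDomain) ∧
      ∀ z ∈ Cᶜ ∩ rayDomain, Complex.exp (f z) = (z - c) / (z - upperPoint) := by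
  obtain ⟨f, hf, hfexp⟩ := exists_continuousOn_log_sub hC.isClosed hC.isPreconnected
    hC.not_isBounded hC.isConnected_compl hc
  obtain ⟨g, hg, hgexp⟩ := exists_continuousOn_log_sub_upperPoint
  refine ⟨fun z => f z - g z, (hf.mono inter_subset_left).sub (hg.mono inter_subset_right), ?_⟩
  intro z hz
  rw [Complex.exp_sub, hfexp z hz.1, hgexp z hz.2]

theorem AbovePath.union_aboveRay_subset_compl_inter_rayDomain (hs : AbovePath C D s)
    (hC : IsLeftTract C) (hD : IsLeftTract D) (hCD : Disjoint C D) :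
    D ∪ AboveRay s ⊆ Cᶜ ∩ rayDomain :=
  subset_inter (disjoint_right.1 (hs.disjoint_union_aboveRay hC hCD))
    (hs.union_aboveRay_subset_rayDomain hD)

theorem AboveVia.of_abovePath {s₁ s₂ : ℝ → ℂ} (h : AboveVia C D s₁) (h₁ : AbovePath C D s₁)
    (h₂ : AbovePath C D s₂) (hC : IsLeftTract C) (hD : IsLeftTract D) (hCD : Disjoint C D) :
    AboveVia C D s₂ := by
  obtain ⟨c, hc⟩ := hC.nonempty
  have hcK := fun {s} (hs : AbovePath C D s) =>
    disjoint_left.1 (hs.disjoint_union_aboveRay hC hCD) hc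
  rw [h₁.aboveVia_iff hC hD hCD hc, ← hasVanishingLog_sub_div_sub_iff
    (h₁.isClosed_union_aboveRay hD.isClosed) (hcK h₁) (h₁.upperPoint_notMem hD)] at h
  rw [h₂.aboveVia_iff hC hD hCD hc, ← hasVanishingLog_sub_div_sub_iff
    (h₂.isClosed_union_aboveRay hD.isClosed) (hcK h₂) (h₂.upperPoint_notMem hD)]
  obtain ⟨f, hf, hfexp⟩ := hC.exists_continuousOn_log_sub_div_sub_upperPoint hc
  have hsub := union_subset (h₁.union_aboveRay_subset_compl_inter_rayDomain hC hD hCD)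
    (h₂.union_aboveRay_subset_compl_inter_rayDomain hC hD hCD)
  refine h.of_isBounded_diff (h₁.isPreconnected_union_aboveRay hD.isPreconnected) ?_
    (hf.mono hsub) fun z hz => hfexp z (hsub hz)
  refine (isCompact_Icc.image_of_continuousOn h₂.1).isBounded.subset ?_
  rintro z ⟨hzD | hz | hzR, hz₁⟩
  · exact absurd (Or.inl hzD) hz₁
  · exact hz
  · exact absurd (Or.inr (Or.inr hzR)) hz₁

theorem AbovePath.cobounded_inf_union_aboveRay_le (hs : AbovePath C D s) :
    Bornology.cobounded ℂ ⊓ 𝓟 (D ∪ AboveRay s) ≤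
      Bornology.cobounded ℂ ⊓ 𝓟 D ⊔ Bornology.cobounded ℂ ⊓ 𝓟 nonnegRay := by
  rw [← inf_sup_left, sup_principal]
  refine le_inf inf_le_left (le_principal_iff.2 ?_)
  filter_upwards [mem_inf_of_left (Bornology.isBounded_def.1
    (isCompact_Icc.image_of_continuousOn hs.1).isBounded),
    mem_inf_of_right (mem_principal_self _)] with z hz hzK
  exact hzK.imp_right fun h => h.resolve_left hz

theorem AbovePath.mem_connectedComponentIn_or (hs : AbovePath C D s) (hC : IsLeftTract C)
    (hD : IsLeftTract D) (hCD : Disjoint C D) {c : ℂ} (hc : c ∈ C) :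
    c ∈ connectedComponentIn (D ∪ AboveRay s)ᶜ upperPoint ∨
      c ∈ connectedComponentIn (D ∪ AboveRay s)ᶜ lowerPoint := by
  obtain ⟨f, hf, hfexp⟩ := hC.exists_continuousOn_log_sub_div_sub_upperPoint hc
  have hK := hs.union_aboveRay_subset_compl_inter_rayDomain hC hD hCD
  have hcK := disjoint_left.1 (hs.disjoint_union_aboveRay hC hCD) hc
  have hDK : D ⊆ D ∪ AboveRay s := subset_union_left
  have hRK : nonnegRay ⊆ D ∪ AboveRay s := fun z hz => Or.inr (Or.inr hz)
  obtain ⟨m, hm⟩ := exists_int_tendsto_of_isPreconnected_compl hD.isClosed hD.isPreconnected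
    hD.isConnected_compl.isPreconnected (mt (@hDK c) hcK) (mt (@hDK _) (hs.upperPoint_notMem hD))
    (hf.mono (hDK.trans hK)) fun z hz => hfexp z (hK (hDK hz))
  obtain ⟨n, hn⟩ := exists_int_tendsto_of_isPreconnected_compl isClosed_nonnegRay
    isPreconnected_nonnegRay isPreconnected_compl_nonnegRay (mt (@hRK c) hcK)
    (mt (@hRK _) (hs.upperPoint_notMem hD))
    (hf.mono (hRK.trans hK)) fun z hz => hfexp z (hK (hRK hz))
  have hDleft : D ⊆ {z | z.re < 1} := fun z hz => (hD.re_neg z hz).trans one_pos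
  -- Multiplying by the power `n - m` of the function with logarithm `logQuotient` evens out the
  -- limits `2πim` along `D` and `2πin` along the ray.
  refine HasVanishingLog.mem_connectedComponentIn_or (k := n - m)
    (hs.isClosed_union_aboveRay hD.isClosed) hcK (hs.upperPoint_notMem hD) (hs.lowerPoint_notMem hD)
    ⟨fun z => f z - n * (2 * Real.pi * Complex.I) + ((n - m : ℤ) : ℂ) * logQuotient z,
      ?_, fun z hz => ?_, Tendsto.mono_left (Tendsto.sup ?_ ?_) hs.cobounded_inf_union_aboveRay_le⟩
  · exact ((hf.mono hK).sub continuousOn_const).add (continuousOn_const.mul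
      (continuousOn_logQuotient.mono (hs.union_aboveRay_subset_rayDomain hD)))
  · rw [Complex.exp_add, Complex.exp_sub, hfexp z (hK hz), Complex.exp_int_mul_two_pi_mul_I,
      div_one, Complex.exp_int_mul, exp_logQuotient (hK hz).2]
  · convert (hm.sub_const _).add ((tendsto_logQuotient_re_lt_one.mono_left
      (inf_le_inf_left _ (principal_mono.2 hDleft))).const_mul _) using 2
    push_cast
    ring
  · convert (hn.sub_const _).add ((tendsto_logQuotient_one_lt_re.mono_left
      cobounded_inf_nonnegRay_le).const_mul _) using 2
    ring

end AboveRay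

section Swap

variable {C D : Set ℂ} {s : ℝ → ℂ}

/-- The retraction of the plane onto the half-plane `{z | z.re ≤ r}` along horizontal lines. -/
def clampRe (r : ℝ) (z : ℂ) : ℂ := ⟨min z.re r, z.im⟩

@[simp] theorem clampRe_re (r : ℝ) (z : ℂ) : (clampRe r z).re = min z.re r := rfl

@[simp] theorem clampRe_im (r : ℝ) (z : ℂ) : (clampRe r z).im = z.im := rfl

theorem clampRe_of_re_le {r : ℝ} {z : ℂ} (h : z.re ≤ r) : clampRe r z = z :=
  Complex.ext (min_eq_left h) rfl

theorem clampRe_of_le_re {r : ℝ} {z : ℂ} (h : r ≤ z.re) : clampRe r z = ⟨r, z.im⟩ :=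
  Complex.ext (min_eq_right h) rfl

theorem continuous_clampRe : Continuous fun p : ℝ × ℂ => clampRe p.1 p.2 := by
  have hmk : (fun p : ℝ × ℂ => clampRe p.1 p.2) =
      fun p => ((min p.2.re p.1 : ℝ) : ℂ) + (p.2.im : ℂ) * Complex.I := by
    ext p
    exact Complex.mk_eq_add_mul_I _ _
  rw [hmk]
  fun_prop

theorem eventually_forall_mk_im_notMem (hC : IsClosed C) (hCre : ∀ z ∈ C, z.re ≠ 0) {K : Set ℂ}
    (hK : IsCompact K) : ∀ᶠ x : ℝ in 𝓝 0, ∀ z ∈ K, (⟨x, z.im⟩ : ℂ) ∉ C := by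
  refine hK.eventually_forall_of_forall_eventually fun z _ => ?_
  have hcont : Continuous fun p : ℝ × ℂ => (⟨p.1, p.2.im⟩ : ℂ) := by
    simp only [Complex.mk_eq_add_mul_I]
    fun_prop
  exact (nhds_prod_eq (X := ℝ) (Y := ℂ)) ▸ hcont.continuousAt.eventually_mem
    (hC.isOpen_compl.mem_nhds fun h => hCre _ h rfl)

theorem exists_abovePath_re_neg (hC : IsLeftTract C) (hD : IsLeftTract D) (hCD : Disjoint C D) :
    ∃ s, AbovePath C D s ∧ ∀ t ∈ Ico (0 : ℝ) 1, (s t).re < 0 := by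
  obtain ⟨d, hd⟩ := hD.nonempty
  have h0 : (0 : ℂ) ∉ C := fun h => (hC.re_neg 0 h).ne rfl
  obtain ⟨γ, hγ⟩ := (hC.isClosed.isOpen_compl.isConnected_iff_isPathConnected.1
    hC.isConnected_compl).joinedIn d (disjoint_right.1 hCD hd) 0 h0
  have hγC : ∀ t, γ.extend t ∉ C := fun t => hγ _
  -- At the heights of `γ`, which form a compact set, `C` keeps a distance from the imaginary axis.
  -- So the path may be pushed into `{z | z.re ≤ -η * (1 - t)}` without meeting `C`.
  obtain ⟨ε, hε, hεC⟩ := Metric.eventually_nhds_iff.1 (eventually_forall_mk_im_notMem hC.isClosed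
    (fun z hz => (hC.re_neg z hz).ne) (isCompact_range γ.continuous))
  set η := min (ε / 2) (-d.re)
  have hη : 0 < η := lt_min (half_pos hε) (neg_pos.2 (hD.re_neg d hd))
  have hηε : η < ε := (min_le_left _ _).trans_lt (half_lt_self hε)
  refine ⟨fun t => clampRe (-(η * (1 - t))) (γ.extend t), ⟨?_, fun t ht => ⟨?_, ?_⟩, ?_, ?_⟩, ?_⟩
  · exact (continuous_clampRe.comp₂ (by fun_prop) γ.continuous_extend).continuousOn
  · exact (min_le_right _ _).trans (by nlinarith [ht.2])
  · dsimp only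
    rcases le_total (γ.extend t).re (-(η * (1 - t))) with h | h
    · simpa only [clampRe_of_re_le h] using hγC t
    · rw [clampRe_of_le_re h]
      refine hεC ?_ (γ.extend t) ⟨_, rfl⟩
      rw [Real.dist_eq, sub_zero, abs_neg, abs_of_nonneg (by nlinarith [ht.2])]
      nlinarith [ht.1]
  · have hdη : d.re ≤ -(η * (1 - 0)) := by linarith [min_le_right (ε / 2) (-d.re)]
    dsimp only
    rwa [γ.extend_zero, clampRe_of_re_le hdη]
  · simp [clampRe_of_re_le]
  · intro t ht
    exact (min_le_right _ _).trans_lt (by nlinarith [ht.2])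

theorem clampRe_zero_ne_zero {z : ℂ} (hz : z ∉ nonnegRay) : clampRe 0 z ≠ 0 := fun h =>
  hz (mem_nonnegRay.2 ⟨min_eq_right_iff.1 (congrArg Complex.re h), congrArg Complex.im h⟩)

theorem clampRe_zero_notMem {K : Set ℂ} {z : ℂ} (hz : z ∉ K) (h : (clampRe 0 z).re < 0) :
    clampRe 0 z ∉ K := by
  have hre : z.re ≤ 0 := ((min_lt_iff.1 h).resolve_right (lt_irrefl 0)).le
  rwa [clampRe_of_re_le hre]

theorem convex_reProdIm {A B : Set ℝ} (hA : Convex ℝ A) (hB : Convex ℝ B) :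
    Convex ℝ (A ×ℂ B) :=
  (hA.linear_preimage Complex.reLm).inter (hB.linear_preimage Complex.imLm)

theorem exists_isCompact_joinedIn_clampRe {K : Set ℂ} (hK : IsClosed K) (hRK : nonnegRay ⊆ K)
    {c w : ℂ} (hcre : c.re ≤ 0) (hc : c ∈ connectedComponentIn Kᶜ w) :
    ∃ Q, IsCompact Q ∧ JoinedIn Q c (clampRe 0 w) ∧ 0 ∉ Q ∧
      ∀ z ∈ Q, z.re ≤ 0 ∧ (z.re < 0 → z ∉ K) := by
  have hw : w ∈ connectedComponentIn Kᶜ w :=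
    mem_connectedComponentIn (connectedComponentIn_nonempty_iff.1 ⟨c, hc⟩)
  obtain ⟨τ, hτ⟩ := (hK.isOpen_compl.connectedComponentIn.isConnected_iff_isPathConnected.1
    ⟨⟨c, hc⟩, isPreconnected_connectedComponentIn⟩).joinedIn c hc w hw
  have hτK : ∀ u, τ u ∉ K := fun u => connectedComponentIn_subset _ _ (hτ u)
  have hclamp : Continuous (clampRe 0) := continuous_clampRe.comp₂ continuous_const continuous_id
  refine ⟨range fun u => clampRe 0 (τ u), isCompact_range (hclamp.comp τ.continuous),
    ⟨(τ.map hclamp).cast (clampRe_of_re_le hcre).symm rfl, fun u => ⟨u, rfl⟩⟩, ?_, ?_⟩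
  · rintro ⟨u, hu⟩
    exact clampRe_zero_ne_zero (fun h => hτK u (hRK h)) hu
  · rintro _ ⟨u, rfl⟩
    exact ⟨min_le_right _ _, clampRe_zero_notMem (hτK u)⟩

theorem joinedIn_clampRe_lowerPoint : JoinedIn ({0} ×ℂ Iic 0) (clampRe 0 lowerPoint) 0 :=
  (convex_reProdIm (convex_singleton 0) (convex_Iic 0)).isPathConnected
    ⟨0, by simp [Complex.mem_reProdIm]⟩ |>.joinedIn _
    (by simp [Complex.mem_reProdIm, Real.pi_pos.le]) _ (by simp [Complex.mem_reProdIm])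

theorem AbovePath.exists_abovePath_symm (hs : AbovePath C D s) (hC : IsLeftTract C)
    (hD : IsLeftTract D) {c : ℂ} (hc : c ∈ C)
    (h : c ∈ connectedComponentIn (D ∪ AboveRay s)ᶜ lowerPoint) :
    ∃ s', AbovePath D C s' ∧ (∀ z ∈ s' '' Icc 0 1, z.re < 0 → z ∉ D ∪ AboveRay s) ∧
      ∀ᶠ z in 𝓝[s' '' Icc 0 1] 0, z ∈ ({0} ×ℂ Iic 0 : Set ℂ) := by
  obtain ⟨Q, hQcpt, hQ, h0Q, hQre⟩ := exists_isCompact_joinedIn_clampRe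
    (hs.isClosed_union_aboveRay hD.isClosed) (fun z hz => Or.inr (Or.inr hz)) (hC.re_neg c hc).le h
  obtain ⟨σ, hσ⟩ := (hQ.mono subset_union_left).trans
    (joinedIn_clampRe_lowerPoint.mono subset_union_right)
  have hσQ : ∀ t, σ.extend t ∈ Q ∪ {0} ×ℂ Iic 0 := fun t => hσ _
  have hσneg : ∀ t, (σ.extend t).re < 0 → σ.extend t ∉ D ∪ AboveRay s := fun t hre =>
    (hσQ t).elim (fun h => (hQre _ h).2 hre) fun h => absurd h.1 hre.ne
  refine ⟨σ.extend, ⟨σ.continuous_extend.continuousOn, fun t _ => ⟨?_, fun htD => ?_⟩, ?_, ?_⟩,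
    ?_, ?_⟩
  · exact (hσQ t).elim (fun h => (hQre _ h).1) fun h => h.1.le
  · exact hσneg t (hD.re_neg _ htD) (Or.inl htD)
  · rwa [σ.extend_zero]
  · exact σ.extend_one
  · rintro _ ⟨t, -, rfl⟩
    exact hσneg t
  · filter_upwards [mem_nhdsWithin_of_mem_nhds (hQcpt.isClosed.isOpen_compl.mem_nhds h0Q),
      self_mem_nhdsWithin]
    rintro _ hzQ ⟨t, -, rfl⟩
    exact (hσQ t).resolve_left hzQ

theorem isPreconnected_firstQuadrant_union {ε : ℝ} (hε : 0 < ε) :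
    IsPreconnected (firstQuadrant ∪ ball 0 ε ∩ {z : ℂ | 0 < z.im} ∪
      ball 0 ε ∩ {z : ℂ | z.re < 0}) := by
  have hε4 : 0 < ε / 4 := by positivity
  have hball : ∀ a : ℝ, |a| = ε / 4 → (⟨a, ε / 4⟩ : ℂ) ∈ ball (0 : ℂ) ε := fun a ha => by
    rw [mem_ball_zero_iff]
    calc ‖(⟨a, ε / 4⟩ : ℂ)‖ ≤ |a| + |ε / 4| := Complex.norm_le_abs_re_add_abs_im _
      _ < ε := by rw [ha, abs_of_pos hε4]; linarith
  have hright := hball (ε / 4) (abs_of_pos hε4)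
  have hleft := hball (-(ε / 4)) ((abs_neg _).trans (abs_of_pos hε4))
  have htop : IsPreconnected (ball 0 ε ∩ {z : ℂ | 0 < z.im}) :=
    ((convex_ball 0 ε).inter (convex_halfSpace_im_gt 0)).isPreconnected
  have hhalf : IsPreconnected (ball 0 ε ∩ {z : ℂ | z.re < 0}) :=
    ((convex_ball 0 ε).inter (convex_halfSpace_re_lt 0)).isPreconnected
  refine IsPreconnected.union ⟨-(ε / 4), ε / 4⟩ (Or.inr ⟨hleft, hε4⟩) ⟨hleft, neg_lt_zero.2 hε4⟩
    (IsPreconnected.union ⟨ε / 4, ε / 4⟩ ?_ ⟨hright, hε4⟩ isPreconnected_firstQuadrant htop) hhalf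
  exact mem_firstQuadrant.2 ⟨hε4, hε4⟩

theorem AbovePath.eventually_mem_connectedComponentIn (hs : AbovePath C D s) (hD : IsLeftTract D)
    (hs0 : ∀ᶠ z in 𝓝[s '' Icc 0 1] 0, z ∈ ({0} ×ℂ Iic 0 : Set ℂ)) :
    ∀ᶠ z in 𝓝 (0 : ℂ), z.re < 0 →
      z ∈ connectedComponentIn (D ∪ AboveRay s)ᶜ upperPoint := by
  have h0D : (0 : ℂ) ∉ D := fun h => (hD.re_neg 0 h).ne rfl
  obtain ⟨ε, hε, hball⟩ := Metric.eventually_nhds_iff_ball.1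
    ((hD.isClosed.isOpen_compl.eventually_mem h0D).and (eventually_nhdsWithin_iff.1 hs0))
  have hcompl : ∀ z ∈ ball (0 : ℂ) ε, z.re < 0 ∨ 0 < z.im → z ∈ (D ∪ AboveRay s)ᶜ := by
    rintro z hz hpos (hzD | hzs | hzR)
    · exact (hball z hz).1 hzD
    · exact hpos.elim ((hball z hz).2 hzs).1.not_lt ((hball z hz).2 hzs).2.not_gt
    · exact hpos.elim (mem_nonnegRay.1 hzR).1.not_gt (mem_nonnegRay.1 hzR).2.not_gt
  filter_upwards [ball_mem_nhds 0 hε] with z hz hre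
  refine (isPreconnected_firstQuadrant_union hε).subset_connectedComponentIn
    (Or.inl (Or.inl upperPoint_mem_firstQuadrant)) ?_ (Or.inr ⟨hz, hre⟩)
  exact union_subset (union_subset (hs.firstQuadrant_subset_compl hD)
    fun w hw => hcompl w hw.1 (Or.inr hw.2)) fun w hw => hcompl w hw.1 (Or.inl hw.2)

theorem AbovePath.liesAbove_symm (hs : AbovePath C D s) (hsneg : ∀ t ∈ Ico (0 : ℝ) 1, (s t).re < 0)
    (hC : IsLeftTract C) (hD : IsLeftTract D) (hCD : Disjoint C D) {c : ℂ} (hc : c ∈ C)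
    (h : c ∈ connectedComponentIn (D ∪ AboveRay s)ᶜ lowerPoint) : LiesAbove D C := by
  obtain ⟨s', hs', hs'neg, hs'0⟩ := hs.exists_abovePath_symm hC hD hc h
  refine ⟨s', hs', (hs'.aboveVia_iff hD hC hCD.symm hs.2.2.1).2 ?_⟩
  have hsub : s '' Ico 0 1 ⊆ (C ∪ AboveRay s')ᶜ := by
    rintro _ ⟨t, ht, rfl⟩ (htC | hts' | htR)
    · exact (hs.2.1 t (Ico_subset_Icc_self ht)).2 htC
    · exact hs'neg _ hts' (hsneg t ht) (Or.inr (Or.inl ⟨t, Ico_subset_Icc_self ht, rfl⟩))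
    · exact (hsneg t ht).not_ge (mem_nonnegRay.1 htR).1
  have hlim : Tendsto s (𝓝[Ico 0 1] 1) (𝓝 0) := by
    have h1 := (hs.1 1 (by simp)).mono_left (nhdsWithin_mono _ Ico_subset_Icc_self)
    rwa [hs.2.2.2] at h1
  have : (𝓝[Ico (0 : ℝ) 1] 1).NeBot := by
    rw [← mem_closure_iff_nhdsWithin_neBot, closure_Ico zero_ne_one]
    simp
  obtain ⟨t, htcc, ht⟩ := ((hlim.eventually
    (hs'.eventually_mem_connectedComponentIn hC hs'0)).and self_mem_nhdsWithin).exists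
  rw [connectedComponentIn_eq (htcc (hsneg t ht))]
  exact (isPreconnected_Ico.image s (hs.1.mono Ico_subset_Icc_self)).subset_connectedComponentIn
    ⟨t, ht, rfl⟩ hsub ⟨0, by simp, rfl⟩

theorem liesAbove_wellDefined_and_total_general (hC : IsLeftTract C) (hD : IsLeftTract D)
    (hCD : Disjoint C D) :
    (∀ s₁ s₂ : ℝ → ℂ, AbovePath C D s₁ → AbovePath C D s₂ →
        (AboveVia C D s₁ ↔ AboveVia C D s₂)) ∧
      (LiesAbove C D ∨ LiesAbove D C) := by
  refine ⟨fun s₁ s₂ h₁ h₂ => ⟨fun h => h.of_abovePath h₁ h₂ hC hD hCD,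
    fun h => h.of_abovePath h₂ h₁ hC hD hCD⟩, ?_⟩
  obtain ⟨s, hs, hsneg⟩ := exists_abovePath_re_neg hC hD hCD
  obtain ⟨c, hc⟩ := hC.nonempty
  exact (hs.mem_connectedComponentIn_or hC hD hCD hc).imp
    (fun hup => ⟨s, hs, (hs.aboveVia_iff hC hD hCD hc).2 hup⟩)
    (hs.liesAbove_symm hsneg hC hD hCD hc)

end Swap

/-- (i) the relation "C lies above D" is independent of the chosen path;
(ii) for any two distinct components of `X̂`, one lies above the other. -/
theorem liesAbove_wellDefined_and_total
    (X : Set ℂ) (hXne : X.Nonempty) (hXcpt : IsCompact X) (hXconn : IsConnected X)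
    (hXns : IsConnected Xᶜ) (h0 : (0:ℂ) ∈ frontier X) (hXb : X ⊆ Metric.ball 0 1)
    (C D : Set ℂ) (hC : C ∈ componentsOf (hatSet X)) (hD : D ∈ componentsOf (hatSet X))
    (hCD : C ≠ D) :
    (∀ s₁ s₂ : ℝ → ℂ, AbovePath C D s₁ → AbovePath C D s₂ →
        (AboveVia C D s₁ ↔ AboveVia C D s₂)) ∧
    (LiesAbove C D ∨ LiesAbove D C) := by
  have h0X : (0 : ℂ) ∈ X := hXcpt.isClosed.frontier_subset h0
  have hTract := fun {E} => isLeftTract_of_mem_componentsOf_hatSet (C := E) hXcpt.isClosed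
    hXconn.isPreconnected hXns h0X hXb
  exact liesAbove_wellDefined_and_total_general (hTract hC) (hTract hD)
    (disjoint_of_mem_componentsOf hC hD hCD)
end
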